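/- arXiv:0711.1135 — 3 statements merged into one kernel-verified Lean document; each statement's English description precedes it below -/
import Mathlib

section
/- Let V, W be representations of a quiver Q over a field K. Then there is an isomorphism of representations rkf(V) ⊗ rkf(W) ≅ rkf(V⊗W): that is, there exists a family of K-linear isomorphisms φ_x : (rkf V)_x ⊗ (rkf W)_x → (rkf(V⊗W))_x, indexed by the vertices x of Q, such that φ_{ha} ∘ ((rkf V)_a ⊗ (rkf W)_a) = (rkf(V⊗W))_a ∘ φ_{ta} for every arrow a. -/
open Submodule

section Defs

variable {K : Type} [Field K]
variable {Q₀ Q₁ : Type} (tl hd : Q₁ → Q₀)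
variable (Vx : Q₀ → Type) [∀ x, AddCommGroup (Vx x)] [∀ x, Module K (Vx x)]
variable (Va : ∀ a : Q₁, Vx (tl a) →ₗ[K] Vx (hd a))

/-- `U` is a subrepresentation of the representation `(Vx, Va)`. -/
def IsSubrep (U : ∀ x, Submodule K (Vx x)) : Prop :=
  ∀ a : Q₁, (U (tl a)).map (Va a) ≤ U (hd a)

/-- `U` is an epimorphic subrepresentation: `V_a(U_{ta}) = U_{ha}` for every arrow. -/
def IsEpiSub (U : ∀ x, Submodule K (Vx x)) : Prop :=
  ∀ a : Q₁, (U (tl a)).map (Va a) = U (hd a)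

/-- `N` is a coclosed subrepresentation: it is a subrepresentation and
`V_a⁻¹(N_{ha}) ⊆ N_{ta}` for every arrow. -/
def IsCoclosedSub (N : ∀ x, Submodule K (Vx x)) : Prop :=
  IsSubrep tl hd Vx Va N ∧ ∀ a : Q₁, (N (hd a)).comap (Va a) ≤ N (tl a)

/-- `Γ(V)`, the sum of all epimorphic subrepresentations. -/
def Gamma (x : Q₀) : Submodule K (Vx x) :=
  ⨆ U : {U : ∀ y, Submodule K (Vx y) // IsEpiSub tl hd Vx Va U}, U.1 x

/-- `Δ(V)`, the intersection of all coclosed subrepresentations. -/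
def Delta (x : Q₀) : Submodule K (Vx x) :=
  ⨅ N : {N : ∀ y, Submodule K (Vx y) // IsCoclosedSub tl hd Vx Va N}, N.1 x

lemma le_gamma {U : ∀ y, Submodule K (Vx y)} (hU : IsEpiSub tl hd Vx Va U) (x : Q₀) :
    U x ≤ Gamma tl hd Vx Va x :=
  le_iSup (fun (W : {U // IsEpiSub tl hd Vx Va U}) => W.1 x) ⟨U, hU⟩

lemma delta_le {N : ∀ y, Submodule K (Vx y)} (hN : IsCoclosedSub tl hd Vx Va N) (x : Q₀) :
    Delta tl hd Vx Va x ≤ N x :=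
  iInf_le (fun (W : {N // IsCoclosedSub tl hd Vx Va N}) => W.1 x) ⟨N, hN⟩

lemma gamma_epi : IsEpiSub tl hd Vx Va (Gamma tl hd Vx Va) := by
  intro a
  apply le_antisymm
  · rw [Gamma, Submodule.map_iSup]
    refine iSup_le fun U => ?_
    rw [U.2 a]
    exact le_gamma tl hd Vx Va U.2 (hd a)
  · refine iSup_le fun U => ?_
    rw [← U.2 a]
    exact Submodule.map_mono (le_gamma tl hd Vx Va U.2 (tl a))

lemma gamma_subrep : IsSubrep tl hd Vx Va (Gamma tl hd Vx Va) :=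
  fun a => le_of_eq (gamma_epi tl hd Vx Va a)

lemma delta_subrep : IsSubrep tl hd Vx Va (Delta tl hd Vx Va) := by
  intro a
  have : ∀ N : {N // IsCoclosedSub tl hd Vx Va N},
      (Delta tl hd Vx Va (tl a)).map (Va a) ≤ N.1 (hd a) :=
    fun N => le_trans (Submodule.map_mono (delta_le tl hd Vx Va N.2 (tl a))) (N.2.1 a)
  exact le_iInf this

/-- `Γ(V) + Δ(V)` pointwise. -/
abbrev GD (x : Q₀) : Submodule K (Vx x) := Gamma tl hd Vx Va x ⊔ Delta tl hd Vx Va x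

/-- `Δ(V)`, seen inside `Γ(V) + Δ(V)`. -/
abbrev rkfDen (x : Q₀) : Submodule K (GD tl hd Vx Va x) :=
  (Delta tl hd Vx Va x).comap (GD tl hd Vx Va x).subtype

/-- The vertex spaces `(Γ(V)_x + Δ(V)_x)/Δ(V)_x` of the global tensor functor. -/
abbrev rkfSpace (x : Q₀) : Type :=
  GD tl hd Vx Va x ⧸ rkfDen tl hd Vx Va x

lemma gd_mapsTo (a : Q₁) : ∀ v ∈ GD tl hd Vx Va (tl a), Va a v ∈ GD tl hd Vx Va (hd a) := by
  intro v hv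
  have : (GD tl hd Vx Va (tl a)).map (Va a) ≤ GD tl hd Vx Va (hd a) := by
    rw [Submodule.map_sup]
    exact sup_le_sup (gamma_subrep tl hd Vx Va a) (delta_subrep tl hd Vx Va a)
  exact this ⟨v, hv, rfl⟩

/-- The arrow maps of the global tensor functor, induced by the `V_a`. -/
def rkfMap (a : Q₁) : rkfSpace tl hd Vx Va (tl a) →ₗ[K] rkfSpace tl hd Vx Va (hd a) :=
  Submodule.liftQ _
    ((rkfDen tl hd Vx Va (hd a)).mkQ ∘ₗ (Va a).restrict (gd_mapsTo tl hd Vx Va a))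
    (by
      intro v hv
      simp only [LinearMap.mem_ker, LinearMap.comp_apply, Submodule.mkQ_apply,
        Submodule.Quotient.mk_eq_zero]
      have hv' : (v : Vx (tl a)) ∈ Delta tl hd Vx Va (tl a) := hv
      show (Va a) (v : Vx (tl a)) ∈ Delta tl hd Vx Va (hd a)
      exact delta_subrep tl hd Vx Va a ⟨(v : Vx (tl a)), hv', rfl⟩)

/-- Isomorphism of quiver representations. -/
def RepIso (Wx : Q₀ → Type) [∀ x, AddCommGroup (Wx x)] [∀ x, Module K (Wx x)]
    (Wa : ∀ a : Q₁, Wx (tl a) →ₗ[K] Wx (hd a)) : Prop :=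
  ∃ φ : ∀ x, Vx x ≃ₗ[K] Wx x, ∀ (a : Q₁) (v : Vx (tl a)), φ (hd a) (Va a v) = Wa a (φ (tl a) v)

end Defs

section Helpers

open TensorProduct

variable {K : Type} [Field K]

/-- Contraction of the right tensor factor against a functional. -/
noncomputable def contrR (V W : Type) [AddCommGroup V] [Module K V] [AddCommGroup W] [Module K W] :
    V ⊗[K] W →ₗ[K] (Module.Dual K W →ₗ[K] V) :=
  TensorProduct.lift (LinearMap.mk₂ K
    (fun v w => (Module.Dual.eval K W w).smulRight v)
    (by intros; ext; simp) (by intros; ext; simp; rw [smul_comm])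
    (by intros; ext; simp [add_smul]) (by intros; ext; simp [mul_smul]))

/-- Contraction of the left tensor factor against a functional. -/
noncomputable def contrL (V W : Type) [AddCommGroup V] [Module K V] [AddCommGroup W] [Module K W] :
    V ⊗[K] W →ₗ[K] (Module.Dual K V →ₗ[K] W) :=
  TensorProduct.lift (LinearMap.mk₂ K
    (fun v w => (Module.Dual.eval K V v).smulRight w)
    (by intros; ext; simp [add_smul]) (by intros; ext; simp [mul_smul])
    (by intros; ext; simp) (by intros; ext; simp; rw [smul_comm]))

section LinAlg

variable {V W V' W' : Type} [AddCommGroup V] [Module K V] [AddCommGroup W] [Module K W]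
  [AddCommGroup V'] [Module K V'] [AddCommGroup W'] [Module K W']

@[simp] lemma contrR_tmul (v : V) (w : W) (φ : Module.Dual K W) :
    contrR V W (v ⊗ₜ[K] w) φ = φ w • v := by simp [contrR]

@[simp] lemma contrL_tmul (v : V) (w : W) (φ : Module.Dual K V) :
    contrL V W (v ⊗ₜ[K] w) φ = φ v • w := by simp [contrL]

lemma contrR_map (A : V →ₗ[K] V') (B : W →ₗ[K] W') (t : V ⊗[K] W) (φ : Module.Dual K W') :
    contrR V' W' (TensorProduct.map A B t) φ = A (contrR V W t (φ ∘ₗ B)) := by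
  induction t with
  | zero => simp
  | tmul v w => simp
  | add a b ha hb => simp [ha, hb]

lemma contrL_map (A : V →ₗ[K] V') (B : W →ₗ[K] W') (t : V ⊗[K] W) (φ : Module.Dual K V') :
    contrL V' W' (TensorProduct.map A B t) φ = B (contrL V W t (φ ∘ₗ A)) := by
  induction t with
  | zero => simp
  | tmul v w => simp
  | add a b ha hb => simp [ha, hb]

/-- The endomorphism of `V` attached to a tensor and a functional. -/
noncomputable def fEnd (t : V ⊗[K] W) (p : Module.Dual K (V ⊗[K] W)) : Module.End K V :=
  contrR V W t ∘ₗ TensorProduct.curry p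

/-- The endomorphism of `W` attached to a tensor and a functional. -/
noncomputable def gEnd (t : V ⊗[K] W) (p : Module.Dual K (V ⊗[K] W)) : Module.End K W :=
  contrL V W t ∘ₗ (TensorProduct.curry p).flip

lemma fEnd_apply (t : V ⊗[K] W) (p : Module.Dual K (V ⊗[K] W)) (v : V) :
    fEnd t p v = contrR V W t (TensorProduct.curry p v) := rfl

lemma gEnd_apply (t : V ⊗[K] W) (p : Module.Dual K (V ⊗[K] W)) (w : W) :
    gEnd t p w = contrL V W t ((TensorProduct.curry p).flip w) := rfl

lemma fEnd_map (A : V →ₗ[K] V') (B : W →ₗ[K] W') (t : V ⊗[K] W)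
    (p : Module.Dual K (V' ⊗[K] W')) (v : V) :
    fEnd (TensorProduct.map A B t) p (A v) = A (fEnd t (p ∘ₗ TensorProduct.map A B) v) := by
  rw [fEnd_apply, contrR_map]
  rfl

lemma gEnd_map (A : V →ₗ[K] V') (B : W →ₗ[K] W') (t : V ⊗[K] W)
    (p : Module.Dual K (V' ⊗[K] W')) (w : W) :
    gEnd (TensorProduct.map A B t) p (B w) = B (gEnd t (p ∘ₗ TensorProduct.map A B) w) := by
  rw [gEnd_apply, contrL_map]
  rfl

lemma fEnd_map_pow (A : V →ₗ[K] V') (B : W →ₗ[K] W') (t : V ⊗[K] W)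
    (p : Module.Dual K (V' ⊗[K] W')) (n : ℕ) (v : V) :
    (fEnd (TensorProduct.map A B t) p ^ n) (A v)
      = A ((fEnd t (p ∘ₗ TensorProduct.map A B) ^ n) v) := by
  induction n with
  | zero => simp
  | succ n ih => rw [pow_succ', pow_succ', Module.End.mul_apply, ih, fEnd_map, Module.End.mul_apply]

lemma gEnd_map_pow (A : V →ₗ[K] V') (B : W →ₗ[K] W') (t : V ⊗[K] W)
    (p : Module.Dual K (V' ⊗[K] W')) (n : ℕ) (w : W) :
    (gEnd (TensorProduct.map A B t) p ^ n) (B w)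
      = B ((gEnd t (p ∘ₗ TensorProduct.map A B) ^ n) w) := by
  induction n with
  | zero => simp
  | succ n ih => rw [pow_succ', pow_succ', Module.End.mul_apply, ih, gEnd_map, Module.End.mul_apply]

lemma fEnd_eq_zero (A : V →ₗ[K] V') (B : W →ₗ[K] W') (t : V ⊗[K] W)
    (p : Module.Dual K (V' ⊗[K] W')) (v : V) (hv : A v = 0) :
    fEnd t (p ∘ₗ TensorProduct.map A B) v = 0 := by
  have : TensorProduct.curry (p ∘ₗ TensorProduct.map A B) v = 0 := by
    ext w; simp [hv]
  rw [fEnd_apply, this, map_zero]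

lemma gEnd_eq_zero (A : V →ₗ[K] V') (B : W →ₗ[K] W') (t : V ⊗[K] W)
    (p : Module.Dual K (V' ⊗[K] W')) (w : W) (hw : B w = 0) :
    gEnd t (p ∘ₗ TensorProduct.map A B) w = 0 := by
  have : (TensorProduct.curry (p ∘ₗ TensorProduct.map A B)).flip w = 0 := by
    ext v; simp [hw]
  rw [gEnd_apply, this, map_zero]

lemma trace_fEnd [FiniteDimensional K V] (t : V ⊗[K] W) (p : Module.Dual K (V ⊗[K] W)) :
    LinearMap.trace K V (fEnd t p) = p t := by
  induction t with
  | zero => simp [fEnd]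
  | tmul v w =>
    have : fEnd (v ⊗ₜ[K] w) p = ((TensorProduct.curry p).flip w).smulRight v := by
      ext v'; simp [fEnd]
    rw [this, LinearMap.trace_smulRight]; simp
  | add a b ha hb =>
    have : fEnd (a + b) p = fEnd a p + fEnd b p := by
      ext v'; simp [fEnd]
    rw [this, map_add, ha, hb, map_add]

lemma curry_fEnd (t : V ⊗[K] W) (p : Module.Dual K (V ⊗[K] W)) (v : V) :
    TensorProduct.curry p (fEnd t p v) = TensorProduct.curry p v ∘ₗ gEnd t p := by
  ext w
  simp only [fEnd_apply, LinearMap.comp_apply, gEnd_apply]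
  suffices h : ∀ s : V ⊗[K] W, TensorProduct.curry p (contrR V W s (TensorProduct.curry p v)) w =
      TensorProduct.curry p v (contrL V W s ((TensorProduct.curry p).flip w)) from h t
  intro s
  induction s with
  | zero => simp
  | tmul a b => simp [mul_comm]
  | add a b ha hb => simp only [map_add, LinearMap.add_apply, ha, hb]

lemma curry_fEnd_pow (t : V ⊗[K] W) (p : Module.Dual K (V ⊗[K] W)) (n : ℕ) (v : V) :
    TensorProduct.curry p ((fEnd t p ^ n) v) = TensorProduct.curry p v ∘ₗ (gEnd t p ^ n) := by
  induction n generalizing v with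
  | zero => rfl
  | succ n ih =>
    rw [pow_succ, Module.End.mul_apply, ih, curry_fEnd, pow_succ']
    rfl

lemma fin_pow_zero [FiniteDimensional K V] (f : Module.End K V) :
    ∃ n : ℕ, ∀ v, (∃ k : ℕ, (f ^ k) v = 0) → (f ^ n) v = 0 := by
  refine ⟨Module.End.maxGenEigenspaceIndex f 0, fun v hv => ?_⟩
  have h : v ∈ Module.End.maxGenEigenspace f 0 := by
    rw [Module.End.mem_maxGenEigenspace]; simpa using hv
  rw [Module.End.maxGenEigenspace_eq] at h
  simpa using h

/-- The key Fitting-type argument. -/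
lemma key_zero [FiniteDimensional K V] [FiniteDimensional K W]
    (D : Submodule K V) (E : Submodule K W) (t : V ⊗[K] W) (p : Module.Dual K (V ⊗[K] W))
    (hD : ∀ v ∈ D, ∃ k : ℕ, (fEnd t p ^ k) v = 0)
    (hE : ∀ w ∈ E, ∃ k : ℕ, (gEnd t p ^ k) w = 0)
    (ht : TensorProduct.map D.mkQ E.mkQ t = 0) : p t = 0 := by
  obtain ⟨n, hn⟩ := fin_pow_zero (fEnd t p)
  obtain ⟨m, hm⟩ := fin_pow_zero (gEnd t p)
  have ht' : t ∈ LinearMap.ker (TensorProduct.map D.mkQ E.mkQ) := ht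
  rw [TensorProduct.map_ker (f := D.subtype) (f' := E.subtype)
    (LinearMap.exact_subtype_mkQ D) (D.mkQ_surjective)
    (LinearMap.exact_subtype_mkQ E) (E.mkQ_surjective)] at ht'
  obtain ⟨e, ⟨e', rfl⟩, d, ⟨d', rfl⟩, hde⟩ := Submodule.mem_sup.1 ht'
  have h1 : ∀ φ, (fEnd t p ^ n) (contrR V W (LinearMap.rTensor W D.subtype d') φ) = 0 := by
    intro φ
    refine hn _ (hD _ ?_)
    rw [LinearMap.rTensor, contrR_map]
    exact Subtype.property _
  have h2 : ∀ φ : Module.Dual K W,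
      contrR V W (LinearMap.lTensor V E.subtype e') (φ ∘ₗ (gEnd t p ^ m)) = 0 := by
    intro φ
    have : (φ ∘ₗ (gEnd t p ^ m)) ∘ₗ E.subtype = 0 := by
      ext w
      simp [hm _ (hE _ w.2)]
    rw [LinearMap.lTensor, contrR_map, this, map_zero, map_zero]
  have h3 : fEnd t p ^ (n + (1 + m)) = 0 := by
    ext v
    rw [pow_add, pow_add, Module.End.mul_apply, Module.End.mul_apply, pow_one, fEnd_apply,
      curry_fEnd_pow]
    have : contrR V W t = contrR V W (LinearMap.lTensor V E.subtype e')
        + contrR V W (LinearMap.rTensor W D.subtype d') := by rw [← map_add, hde]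
    rw [this, LinearMap.add_apply, h2, zero_add, h1]
    rfl
  rw [← trace_fEnd]
  exact (LinearMap.isNilpotent_trace_of_isNilpotent ⟨_, h3⟩).eq_zero

lemma exists_extend_dual (A : V →ₗ[K] V') (M : Submodule K V) (N : Submodule K V')
    (hMN : M ≤ N.comap A) (hNM : N.comap A ≤ M)
    (p : Module.Dual K V) (hp : ∀ v ∈ M, p v = 0) :
    ∃ p' : Module.Dual K V', (∀ v ∈ N, p' v = 0) ∧ p' ∘ₗ A = p := by
  have hinj : Function.Injective (M.mapQ N A hMN) := by
    rw [← LinearMap.ker_eq_bot, Submodule.ker_mapQ, ← LinearMap.le_ker_iff_map, Submodule.ker_mkQ]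
    exact hNM
  obtain ⟨q, hq⟩ := LinearMap.dualMap_surjective_of_injective hinj (M.liftQ p hp)
  refine ⟨q ∘ₗ N.mkQ, fun v hv => ?_, ?_⟩
  · simp [(Submodule.Quotient.mk_eq_zero N).2 hv]
  · ext v
    have := congrArg (fun r => r (M.mkQ v)) hq
    exact this

lemma contrR_sep {s t : V ⊗[K] W} (h : ∀ φ, contrR V W s φ = contrR V W t φ) : s = t := by
  classical
  let b := Module.Basis.ofVectorSpace K W
  apply (TensorProduct.equivFinsuppOfBasisRight (M := V) b).injective
  ext i
  have key : ∀ s : V ⊗[K] W, TensorProduct.equivFinsuppOfBasisRight b s i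
      = contrR V W s (b.coord i) := by
    intro s
    induction s with
    | zero => simp
    | tmul v w => simp
    | add x y hx hy => simp [hx, hy]
  rw [key, key, h]

lemma contrL_sep {s t : V ⊗[K] W} (h : ∀ φ, contrL V W s φ = contrL V W t φ) : s = t := by
  apply (TensorProduct.comm K V W).injective
  apply contrR_sep
  have key : ∀ (s : V ⊗[K] W) φ, contrR W V (TensorProduct.comm K V W s) φ = contrL V W s φ := by
    intro s φ
    induction s with
    | zero => simp
    | tmul v w => simp
    | add x y hx hy => simp [hx, hy]
  intro φ
  rw [key, key, h]

lemma exists_proj (G : Submodule K V) : ∃ π : V →ₗ[K] G, ∀ v ∈ G, (π v : V) = v := by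
  obtain ⟨π, hπ⟩ := G.subtype.exists_leftInverse_of_injective (by simp)
  refine ⟨π, fun v hv => ?_⟩
  have := congrArg (fun r => r ⟨v, hv⟩) hπ
  simpa using congrArg Subtype.val this

lemma mem_range_of_contr (G : Submodule K V) (H : Submodule K W) (t : V ⊗[K] W)
    (hG : ∀ φ, contrR V W t φ ∈ G) (hH : ∀ φ, contrL V W t φ ∈ H) :
    ∃ s : G ⊗[K] H, TensorProduct.map G.subtype H.subtype s = t := by
  obtain ⟨π, hπ⟩ := exists_proj G
  obtain ⟨ρ, hρ⟩ := exists_proj H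
  refine ⟨TensorProduct.map π ρ t, ?_⟩
  have h1 : TensorProduct.map (G.subtype ∘ₗ π) LinearMap.id t = t := by
    apply contrR_sep
    intro φ
    rw [contrR_map]
    exact hπ _ (hG _)
  have h2 : TensorProduct.map LinearMap.id (H.subtype ∘ₗ ρ) t = t := by
    apply contrL_sep
    intro φ
    rw [contrL_map]
    exact hρ _ (hH _)
  rw [TensorProduct.map_map]
  have h3 := congrArg (TensorProduct.map (G.subtype ∘ₗ π) LinearMap.id) h2
  rw [h1, TensorProduct.map_map] at h3
  exact h3

end LinAlg

section Rep

variable {Q₀ Q₁ : Type} (tl hd : Q₁ → Q₀)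

section One
variable (Vx : Q₀ → Type) [∀ x, AddCommGroup (Vx x)] [∀ x, Module K (Vx x)]
variable (Va : ∀ a : Q₁, Vx (tl a) →ₗ[K] Vx (hd a))

lemma delta_coclosed : IsCoclosedSub tl hd Vx Va (Delta tl hd Vx Va) := by
  refine ⟨delta_subrep tl hd Vx Va, fun a => le_iInf fun N => ?_⟩
  exact le_trans (Submodule.comap_mono (delta_le tl hd Vx Va N.2 (hd a))) (N.2.2 a)

lemma delta_ext (a : Q₁) (p : Module.Dual K (Vx (tl a)))
    (hp : ∀ v ∈ Delta tl hd Vx Va (tl a), p v = 0) :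
    ∃ p' : Module.Dual K (Vx (hd a)), (∀ v ∈ Delta tl hd Vx Va (hd a), p' v = 0) ∧
      p' ∘ₗ Va a = p :=
  exists_extend_dual (Va a) _ _ (Submodule.map_le_iff_le_comap.1 (delta_subrep tl hd Vx Va a))
    ((delta_coclosed tl hd Vx Va).2 a) p hp

lemma delta_map_mem (a : Q₁) {v : Vx (tl a)} (hv : v ∈ Delta tl hd Vx Va (tl a)) :
    Va a v ∈ Delta tl hd Vx Va (hd a) := delta_subrep tl hd Vx Va a ⟨v, hv, rfl⟩

lemma gamma_map_mem (a : Q₁) {v : Vx (tl a)} (hv : v ∈ Gamma tl hd Vx Va (tl a)) :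
    Va a v ∈ Gamma tl hd Vx Va (hd a) := gamma_subrep tl hd Vx Va a ⟨v, hv, rfl⟩

lemma gamma_lift (a : Q₁) {v : Vx (hd a)} (hv : v ∈ Gamma tl hd Vx Va (hd a)) :
    ∃ u ∈ Gamma tl hd Vx Va (tl a), Va a u = v := by
  rw [← gamma_epi tl hd Vx Va a] at hv
  exact hv

/-- The embedding of `rkf V` in `V / Δ`. -/
noncomputable def rkfEmb (x : Q₀) : rkfSpace tl hd Vx Va x →ₗ[K] Vx x ⧸ Delta tl hd Vx Va x :=
  Submodule.mapQ _ _ (GD tl hd Vx Va x).subtype le_rfl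

@[simp] lemma rkfEmb_mk (x : Q₀) (v : GD tl hd Vx Va x) :
    rkfEmb tl hd Vx Va x (Submodule.Quotient.mk v) = Submodule.Quotient.mk (v : Vx x) := rfl

lemma rkfEmb_injective (x : Q₀) : Function.Injective (rkfEmb tl hd Vx Va x) := by
  rw [← LinearMap.ker_eq_bot, rkfEmb, Submodule.ker_mapQ, ← LinearMap.le_ker_iff_map, Submodule.ker_mkQ]

/-- The arrow maps of `V / Δ`. -/
noncomputable def quotMap (a : Q₁) :
    (Vx (tl a) ⧸ Delta tl hd Vx Va (tl a)) →ₗ[K] (Vx (hd a) ⧸ Delta tl hd Vx Va (hd a)) :=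
  Submodule.mapQ _ _ (Va a) (Submodule.map_le_iff_le_comap.1 (delta_subrep tl hd Vx Va a))

lemma rkfEmb_nat (a : Q₁) :
    rkfEmb tl hd Vx Va (hd a) ∘ₗ rkfMap tl hd Vx Va a
      = quotMap tl hd Vx Va a ∘ₗ rkfEmb tl hd Vx Va (tl a) := by
  ext v
  rfl

end One

variable (Vx : Q₀ → Type) [∀ x, AddCommGroup (Vx x)] [∀ x, Module K (Vx x)]
variable (Va : ∀ a : Q₁, Vx (tl a) →ₗ[K] Vx (hd a))
variable (Wx : Q₀ → Type) [∀ x, AddCommGroup (Wx x)] [∀ x, Module K (Wx x)]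
variable (Wa : ∀ a : Q₁, Wx (tl a) →ₗ[K] Wx (hd a))

/-- `Γ(V ⊗ W)`. -/
abbrev GT (x : Q₀) : Submodule K (Vx x ⊗[K] Wx x) :=
  Gamma tl hd (fun y => TensorProduct K (Vx y) (Wx y)) (fun a => TensorProduct.map (Va a) (Wa a)) x

/-- `Δ(V ⊗ W)`. -/
abbrev DT (x : Q₀) : Submodule K (Vx x ⊗[K] Wx x) :=
  Delta tl hd (fun y => TensorProduct K (Vx y) (Wx y)) (fun a => TensorProduct.map (Va a) (Wa a)) x

/-- The annihilator of `Δ(V ⊗ W)`. -/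
def AnnDT (x : Q₀) (p : Module.Dual K (Vx x ⊗[K] Wx x)) : Prop :=
  ∀ s ∈ DT tl hd Vx Va Wx Wa x, p s = 0

lemma annDT_comp (a : Q₁) (p : Module.Dual K (Vx (hd a) ⊗[K] Wx (hd a)))
    (hp : AnnDT tl hd Vx Va Wx Wa (hd a) p) :
    AnnDT tl hd Vx Va Wx Wa (tl a) (p ∘ₗ TensorProduct.map (Va a) (Wa a)) := fun s hs =>
  hp _ (delta_map_mem tl hd (fun y => TensorProduct K (Vx y) (Wx y))
    (fun a => TensorProduct.map (Va a) (Wa a)) a hs)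

lemma annDT_ext (a : Q₁) (p : Module.Dual K (Vx (tl a) ⊗[K] Wx (tl a)))
    (hp : AnnDT tl hd Vx Va Wx Wa (tl a) p) :
    ∃ p', AnnDT tl hd Vx Va Wx Wa (hd a) p' ∧ p' ∘ₗ TensorProduct.map (Va a) (Wa a) = p :=
  delta_ext tl hd (fun y => TensorProduct K (Vx y) (Wx y))
    (fun a => TensorProduct.map (Va a) (Wa a)) a p hp

lemma gt_lift (a : Q₁) {t} (ht : t ∈ GT tl hd Vx Va Wx Wa (hd a)) :
    ∃ u ∈ GT tl hd Vx Va Wx Wa (tl a), TensorProduct.map (Va a) (Wa a) u = t :=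
  gamma_lift tl hd (fun y => TensorProduct K (Vx y) (Wx y))
    (fun a => TensorProduct.map (Va a) (Wa a)) a ht

lemma gt_map (a : Q₁) {t} (ht : t ∈ GT tl hd Vx Va Wx Wa (tl a)) :
    TensorProduct.map (Va a) (Wa a) t ∈ GT tl hd Vx Va Wx Wa (hd a) :=
  gamma_map_mem tl hd (fun y => TensorProduct K (Vx y) (Wx y))
    (fun a => TensorProduct.map (Va a) (Wa a)) a ht

lemma mem_max {V : Type} [AddCommGroup V] [Module K V] (f : Module.End K V) (v : V) :
    v ∈ Module.End.maxGenEigenspace f 0 ↔ ∃ k : ℕ, (f ^ k) v = 0 := by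
  rw [Module.End.mem_maxGenEigenspace]; simp

lemma delta_nil_left (x : Q₀) (t) (ht : t ∈ GT tl hd Vx Va Wx Wa x)
    (p) (hp : AnnDT tl hd Vx Va Wx Wa x p) (v) (hv : v ∈ Delta tl hd Vx Va x) :
    ∃ k : ℕ, (fEnd t p ^ k) v = 0 := by
  let N : ∀ y, Submodule K (Vx y) := fun y =>
    ⨅ t ∈ GT tl hd Vx Va Wx Wa y, ⨅ p, ⨅ _ : AnnDT tl hd Vx Va Wx Wa y p,
      Module.End.maxGenEigenspace (fEnd t p) 0
  have hN : ∀ y v, v ∈ N y ↔ ∀ t ∈ GT tl hd Vx Va Wx Wa y, ∀ p, AnnDT tl hd Vx Va Wx Wa y p →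
      ∃ k : ℕ, (fEnd t p ^ k) v = 0 := by
    intro y v
    simp only [N, Submodule.mem_iInf, mem_max]
  have hco : IsCoclosedSub tl hd Vx Va N := by
    refine ⟨fun a => ?_, fun a v hv => ?_⟩
    · rintro _ ⟨v, hv, rfl⟩
      rw [hN]
      intro t ht p hp
      obtain ⟨u, hu, rfl⟩ := gt_lift tl hd Vx Va Wx Wa a ht
      obtain ⟨k, hk⟩ := (hN _ _).1 hv u hu _ (annDT_comp tl hd Vx Va Wx Wa a p hp)
      exact ⟨k, by rw [fEnd_map_pow, hk, map_zero]⟩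
    · rw [hN]
      intro t ht p hp
      obtain ⟨p', hp', rfl⟩ := annDT_ext tl hd Vx Va Wx Wa a p hp
      obtain ⟨k, hk⟩ := (hN _ _).1 hv _ (gt_map tl hd Vx Va Wx Wa a ht) p' hp'
      rw [fEnd_map_pow] at hk
      exact ⟨k + 1, by rw [pow_succ', Module.End.mul_apply]; exact fEnd_eq_zero _ _ _ _ _ hk⟩
  exact (hN _ _).1 (delta_le tl hd Vx Va hco x hv) t ht p hp

lemma delta_nil_right (x : Q₀) (t) (ht : t ∈ GT tl hd Vx Va Wx Wa x)
    (p) (hp : AnnDT tl hd Vx Va Wx Wa x p) (w) (hw : w ∈ Delta tl hd Wx Wa x) :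
    ∃ k : ℕ, (gEnd t p ^ k) w = 0 := by
  let N : ∀ y, Submodule K (Wx y) := fun y =>
    ⨅ t ∈ GT tl hd Vx Va Wx Wa y, ⨅ p, ⨅ _ : AnnDT tl hd Vx Va Wx Wa y p,
      Module.End.maxGenEigenspace (gEnd t p) 0
  have hN : ∀ y v, v ∈ N y ↔ ∀ t ∈ GT tl hd Vx Va Wx Wa y, ∀ p, AnnDT tl hd Vx Va Wx Wa y p →
      ∃ k : ℕ, (gEnd t p ^ k) v = 0 := by
    intro y v
    simp only [N, Submodule.mem_iInf, mem_max]
  have hco : IsCoclosedSub tl hd Wx Wa N := by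
    refine ⟨fun a => ?_, fun a v hv => ?_⟩
    · rintro _ ⟨v, hv, rfl⟩
      rw [hN]
      intro t ht p hp
      obtain ⟨u, hu, rfl⟩ := gt_lift tl hd Vx Va Wx Wa a ht
      obtain ⟨k, hk⟩ := (hN _ _).1 hv u hu _ (annDT_comp tl hd Vx Va Wx Wa a p hp)
      exact ⟨k, by rw [gEnd_map_pow, hk, map_zero]⟩
    · rw [hN]
      intro t ht p hp
      obtain ⟨p', hp', rfl⟩ := annDT_ext tl hd Vx Va Wx Wa a p hp
      obtain ⟨k, hk⟩ := (hN _ _).1 hv _ (gt_map tl hd Vx Va Wx Wa a ht) p' hp'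
      rw [gEnd_map_pow] at hk
      exact ⟨k + 1, by rw [pow_succ', Module.End.mul_apply]; exact gEnd_eq_zero _ _ _ _ _ hk⟩
  exact (hN _ _).1 (delta_le tl hd Wx Wa hco x hw) t ht p hp

/-- The map `V ⊗ W → V/Δ ⊗ W/Δ`. -/
noncomputable abbrev qq (x : Q₀) : Vx x ⊗[K] Wx x →ₗ[K]
    (Vx x ⧸ Delta tl hd Vx Va x) ⊗[K] (Wx x ⧸ Delta tl hd Wx Wa x) :=
  TensorProduct.map (Delta tl hd Vx Va x).mkQ (Delta tl hd Wx Wa x).mkQ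

lemma gamma_inter [∀ x, FiniteDimensional K (Vx x)] [∀ x, FiniteDimensional K (Wx x)]
    (x : Q₀) (t) (ht : t ∈ GT tl hd Vx Va Wx Wa x)
    (h0 : qq tl hd Vx Va Wx Wa x t = 0) : t ∈ DT tl hd Vx Va Wx Wa x := by
  rw [← Subspace.forall_mem_dualAnnihilator_apply_eq_zero_iff]
  intro p hp
  have hp' : AnnDT tl hd Vx Va Wx Wa x p := (Submodule.mem_dualAnnihilator p).1 hp
  exact key_zero _ _ t p (delta_nil_left tl hd Vx Va Wx Wa x t ht p hp')
    (delta_nil_right tl hd Vx Va Wx Wa x t ht p hp') h0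

lemma delta_le_ker (x : Q₀) : DT tl hd Vx Va Wx Wa x ≤ LinearMap.ker (qq tl hd Vx Va Wx Wa x) := by
  have hinj : ∀ (Ux : Q₀ → Type) [∀ x, AddCommGroup (Ux x)] [∀ x, Module K (Ux x)]
      (Ua : ∀ a : Q₁, Ux (tl a) →ₗ[K] Ux (hd a)) (a : Q₁),
      Function.Injective (quotMap tl hd Ux Ua a) := by
    intro Ux _ _ Ua a
    rw [← LinearMap.ker_eq_bot, quotMap, Submodule.ker_mapQ, ← LinearMap.le_ker_iff_map, Submodule.ker_mkQ]
    exact (delta_coclosed tl hd Ux Ua).2 a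
  have hnat : ∀ a s, qq tl hd Vx Va Wx Wa (hd a) (TensorProduct.map (Va a) (Wa a) s) =
      TensorProduct.map (quotMap tl hd Vx Va a) (quotMap tl hd Wx Wa a)
        (qq tl hd Vx Va Wx Wa (tl a) s) := by
    intro a s
    rw [TensorProduct.map_map, TensorProduct.map_map]
    rfl
  refine delta_le tl hd (fun y => TensorProduct K (Vx y) (Wx y))
    (fun a => TensorProduct.map (Va a) (Wa a))
    (N := fun y => LinearMap.ker (qq tl hd Vx Va Wx Wa y)) ⟨fun a => ?_, fun a s hs => ?_⟩ x
  · rintro _ ⟨s, hs, rfl⟩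
    have hs' : qq tl hd Vx Va Wx Wa (tl a) s = 0 := hs
    rw [LinearMap.mem_ker, hnat, hs', map_zero]
  · have hs' : qq tl hd Vx Va Wx Wa (hd a) (TensorProduct.map (Va a) (Wa a) s) = 0 := hs
    rw [hnat] at hs'
    exact TensorProduct.map_injective_of_flat_flat _ _ (hinj Vx Va a) (hinj Wx Wa a)
      (by rw [hs', map_zero])

lemma contrR_gamma (x : Q₀) (t) (ht : t ∈ GT tl hd Vx Va Wx Wa x) (φ : Module.Dual K (Wx x))
    (hφ : ∀ w ∈ Delta tl hd Wx Wa x, φ w = 0) :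
    contrR (Vx x) (Wx x) t φ ∈ Gamma tl hd Vx Va x := by
  let U : ∀ y, Submodule K (Vx y) := fun y => Submodule.span K
    {v | ∃ t ∈ GT tl hd Vx Va Wx Wa y, ∃ φ : Module.Dual K (Wx y),
      (∀ w ∈ Delta tl hd Wx Wa y, φ w = 0) ∧ contrR (Vx y) (Wx y) t φ = v}
  have hU : IsEpiSub tl hd Vx Va U := by
    intro a
    apply le_antisymm
    · rw [Submodule.map_span_le]
      rintro _ ⟨t, ht, φ, hφ, rfl⟩
      obtain ⟨φ', hφ', rfl⟩ := delta_ext tl hd Wx Wa a φ hφ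
      exact Submodule.subset_span ⟨_, gt_map tl hd Vx Va Wx Wa a ht, φ', hφ', contrR_map _ _ _ _⟩
    · refine Submodule.span_le.2 ?_
      rintro _ ⟨t, ht, φ, hφ, rfl⟩
      obtain ⟨u, hu, rfl⟩ := gt_lift tl hd Vx Va Wx Wa a ht
      exact ⟨_, Submodule.subset_span ⟨u, hu, φ ∘ₗ Wa a,
        fun w hw => hφ _ (delta_map_mem tl hd Wx Wa a hw), rfl⟩, (contrR_map _ _ _ _).symm⟩
  exact le_gamma tl hd Vx Va hU x (Submodule.subset_span ⟨t, ht, φ, hφ, rfl⟩)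

lemma contrL_gamma (x : Q₀) (t) (ht : t ∈ GT tl hd Vx Va Wx Wa x) (φ : Module.Dual K (Vx x))
    (hφ : ∀ w ∈ Delta tl hd Vx Va x, φ w = 0) :
    contrL (Vx x) (Wx x) t φ ∈ Gamma tl hd Wx Wa x := by
  let U : ∀ y, Submodule K (Wx y) := fun y => Submodule.span K
    {v | ∃ t ∈ GT tl hd Vx Va Wx Wa y, ∃ φ : Module.Dual K (Vx y),
      (∀ w ∈ Delta tl hd Vx Va y, φ w = 0) ∧ contrL (Vx y) (Wx y) t φ = v}
  have hU : IsEpiSub tl hd Wx Wa U := by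
    intro a
    apply le_antisymm
    · rw [Submodule.map_span_le]
      rintro _ ⟨t, ht, φ, hφ, rfl⟩
      obtain ⟨φ', hφ', rfl⟩ := delta_ext tl hd Vx Va a φ hφ
      exact Submodule.subset_span ⟨_, gt_map tl hd Vx Va Wx Wa a ht, φ', hφ', contrL_map _ _ _ _⟩
    · refine Submodule.span_le.2 ?_
      rintro _ ⟨t, ht, φ, hφ, rfl⟩
      obtain ⟨u, hu, rfl⟩ := gt_lift tl hd Vx Va Wx Wa a ht
      exact ⟨_, Submodule.subset_span ⟨u, hu, φ ∘ₗ Va a,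
        fun w hw => hφ _ (delta_map_mem tl hd Vx Va a hw), rfl⟩, (contrL_map _ _ _ _).symm⟩
  exact le_gamma tl hd Wx Wa hU x (Submodule.subset_span ⟨t, ht, φ, hφ, rfl⟩)

/-- `rkf V ⊗ rkf W → V/Δ ⊗ W/Δ`. -/
noncomputable def alphaMap (x : Q₀) :
    rkfSpace tl hd Vx Va x ⊗[K] rkfSpace tl hd Wx Wa x →ₗ[K]
    (Vx x ⧸ Delta tl hd Vx Va x) ⊗[K] (Wx x ⧸ Delta tl hd Wx Wa x) :=
  TensorProduct.map (rkfEmb tl hd Vx Va x) (rkfEmb tl hd Wx Wa x)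

lemma alphaMap_injective (x : Q₀) : Function.Injective (alphaMap tl hd Vx Va Wx Wa x) :=
  TensorProduct.map_injective_of_flat_flat _ _ (rkfEmb_injective tl hd Vx Va x)
    (rkfEmb_injective tl hd Wx Wa x)

/-- `rkf (V ⊗ W) → V/Δ ⊗ W/Δ`. -/
noncomputable def betaMap (x : Q₀) :
    rkfSpace tl hd (fun y => TensorProduct K (Vx y) (Wx y))
            (fun a => TensorProduct.map (Va a) (Wa a)) x →ₗ[K]
    (Vx x ⧸ Delta tl hd Vx Va x) ⊗[K] (Wx x ⧸ Delta tl hd Wx Wa x) :=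
  (Submodule.liftQ _ (qq tl hd Vx Va Wx Wa x) (delta_le_ker tl hd Vx Va Wx Wa x)) ∘ₗ
    rkfEmb tl hd (fun y => TensorProduct K (Vx y) (Wx y))
            (fun a => TensorProduct.map (Va a) (Wa a)) x

lemma betaMap_mk (x : Q₀) (s : GD tl hd (fun y => TensorProduct K (Vx y) (Wx y))
            (fun a => TensorProduct.map (Va a) (Wa a)) x) :
    betaMap tl hd Vx Va Wx Wa x (Submodule.Quotient.mk s)
      = qq tl hd Vx Va Wx Wa x (s : Vx x ⊗[K] Wx x) := rfl

lemma betaMap_injective [∀ x, FiniteDimensional K (Vx x)] [∀ x, FiniteDimensional K (Wx x)]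
    (x : Q₀) : Function.Injective (betaMap tl hd Vx Va Wx Wa x) := by
  rw [injective_iff_map_eq_zero]
  intro s hs
  obtain ⟨⟨s, hsm⟩, rfl⟩ := Submodule.Quotient.mk_surjective _ s
  rw [betaMap_mk] at hs
  obtain ⟨g, hg, d, hd', rfl⟩ := Submodule.mem_sup.1 hsm
  have h1 : qq tl hd Vx Va Wx Wa x d = 0 := delta_le_ker tl hd Vx Va Wx Wa x hd'
  have h2 : qq tl hd Vx Va Wx Wa x g = 0 := by
    have := map_add (qq tl hd Vx Va Wx Wa x) g d
    rw [h1, add_zero] at this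
    exact this.symm.trans hs
  rw [Submodule.Quotient.mk_eq_zero]
  exact Submodule.add_mem _ (gamma_inter tl hd Vx Va Wx Wa x g hg h2) hd'

lemma tmul_mem_GT (x : Q₀) (v : Vx x) (hv : v ∈ Gamma tl hd Vx Va x) (w : Wx x)
    (hw : w ∈ Gamma tl hd Wx Wa x) : v ⊗ₜ[K] w ∈ GT tl hd Vx Va Wx Wa x := by
  let U : ∀ y, Submodule K (Vx y ⊗[K] Wx y) := fun y => Submodule.span K
    {s | ∃ v ∈ Gamma tl hd Vx Va y, ∃ w ∈ Gamma tl hd Wx Wa y, v ⊗ₜ[K] w = s}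
  have hU : IsEpiSub tl hd (fun y => TensorProduct K (Vx y) (Wx y))
            (fun a => TensorProduct.map (Va a) (Wa a)) U := by
    intro a
    apply le_antisymm
    · rw [Submodule.map_span_le]
      rintro _ ⟨v, hv, w, hw, rfl⟩
      exact Submodule.subset_span ⟨_, gamma_map_mem tl hd Vx Va a hv, _,
        gamma_map_mem tl hd Wx Wa a hw, rfl⟩
    · refine Submodule.span_le.2 ?_
      rintro _ ⟨v, hv, w, hw, rfl⟩
      obtain ⟨v', hv', rfl⟩ := gamma_lift tl hd Vx Va a hv
      obtain ⟨w', hw', rfl⟩ := gamma_lift tl hd Wx Wa a hw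
      exact ⟨_, Submodule.subset_span ⟨v', hv', w', hw', rfl⟩, rfl⟩
  exact le_gamma tl hd (fun y => TensorProduct K (Vx y) (Wx y))
            (fun a => TensorProduct.map (Va a) (Wa a)) hU x
    (Submodule.subset_span ⟨v, hv, w, hw, rfl⟩)

lemma range_rkfEmb (x : Q₀) :
    LinearMap.range (rkfEmb tl hd Vx Va x)
      = (Gamma tl hd Vx Va x).map (Delta tl hd Vx Va x).mkQ := by
  apply le_antisymm
  · rintro _ ⟨v, rfl⟩
    obtain ⟨⟨v, hv⟩, rfl⟩ := Submodule.Quotient.mk_surjective _ v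
    obtain ⟨g, hg, d, hd', rfl⟩ := Submodule.mem_sup.1 hv
    refine ⟨g, hg, ?_⟩
    rw [rkfEmb_mk]
    simp [(Submodule.Quotient.mk_eq_zero _).2 hd']
  · rintro _ ⟨v, hv, rfl⟩
    exact ⟨Submodule.Quotient.mk ⟨v, Submodule.mem_sup_left hv⟩, rfl⟩

lemma range_eq (x : Q₀) : LinearMap.range (alphaMap tl hd Vx Va Wx Wa x)
    = LinearMap.range (betaMap tl hd Vx Va Wx Wa x) := by
  apply le_antisymm
  · rintro _ ⟨s, rfl⟩
    induction s with
    | zero => simp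
    | add a b ha hb => rw [map_add]; exact Submodule.add_mem _ ha hb
    | tmul v w =>
      obtain ⟨v', hv', hv⟩ : rkfEmb tl hd Vx Va x v ∈
          (Gamma tl hd Vx Va x).map (Delta tl hd Vx Va x).mkQ := by
        rw [← range_rkfEmb]; exact ⟨v, rfl⟩
      obtain ⟨w', hw', hw⟩ : rkfEmb tl hd Wx Wa x w ∈
          (Gamma tl hd Wx Wa x).map (Delta tl hd Wx Wa x).mkQ := by
        rw [← range_rkfEmb]; exact ⟨w, rfl⟩
      refine ⟨Submodule.Quotient.mk ⟨v' ⊗ₜ[K] w',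
        Submodule.mem_sup_left (tmul_mem_GT tl hd Vx Va Wx Wa x v' hv' w' hw')⟩, ?_⟩
      rw [betaMap_mk, alphaMap, TensorProduct.map_tmul, hv, hw]
      rfl
  · rintro _ ⟨s, rfl⟩
    obtain ⟨⟨s, hsm⟩, rfl⟩ := Submodule.Quotient.mk_surjective _ s
    rw [betaMap_mk]
    obtain ⟨g, hg, d, hd', rfl⟩ := Submodule.mem_sup.1 hsm
    have h1 : qq tl hd Vx Va Wx Wa x d = 0 := delta_le_ker tl hd Vx Va Wx Wa x hd'
    have h2 : qq tl hd Vx Va Wx Wa x (g + d) = qq tl hd Vx Va Wx Wa x g := by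
      rw [map_add, h1, add_zero]
    change qq tl hd Vx Va Wx Wa x (g + d) ∈ _
    rw [h2]
    obtain ⟨r, hr⟩ := mem_range_of_contr (LinearMap.range (rkfEmb tl hd Vx Va x))
      (LinearMap.range (rkfEmb tl hd Wx Wa x)) (qq tl hd Vx Va Wx Wa x g)
      (by
        intro φ
        rw [range_rkfEmb, qq, contrR_map]
        refine ⟨_, contrR_gamma tl hd Vx Va Wx Wa x g hg _ fun w hw => ?_, rfl⟩
        simp [(Submodule.Quotient.mk_eq_zero _).2 hw])
      (by
        intro φ
        rw [range_rkfEmb, qq, contrL_map]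
        refine ⟨_, contrL_gamma tl hd Vx Va Wx Wa x g hg _ fun w hw => ?_, rfl⟩
        simp [(Submodule.Quotient.mk_eq_zero _).2 hw])
    rw [← hr]
    clear hr
    induction r with
    | zero => simp
    | add a b ha hb => rw [map_add]; exact Submodule.add_mem _ ha hb
    | tmul v w =>
      obtain ⟨_, v, rfl⟩ := v
      obtain ⟨_, w, rfl⟩ := w
      exact ⟨v ⊗ₜ[K] w, rfl⟩

lemma alphaMap_nat (a : Q₁) (v) :
    alphaMap tl hd Vx Va Wx Wa (hd a)
      (TensorProduct.map (rkfMap tl hd Vx Va a) (rkfMap tl hd Wx Wa a) v) =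
    TensorProduct.map (quotMap tl hd Vx Va a) (quotMap tl hd Wx Wa a)
      (alphaMap tl hd Vx Va Wx Wa (tl a) v) := by
  rw [alphaMap, alphaMap, TensorProduct.map_map, TensorProduct.map_map, rkfEmb_nat, rkfEmb_nat]

lemma betaMap_nat (a : Q₁) (v) :
    betaMap tl hd Vx Va Wx Wa (hd a)
      (rkfMap tl hd (fun y => TensorProduct K (Vx y) (Wx y))
              (fun a => TensorProduct.map (Va a) (Wa a)) a v) =
    TensorProduct.map (quotMap tl hd Vx Va a) (quotMap tl hd Wx Wa a)
      (betaMap tl hd Vx Va Wx Wa (tl a) v) := by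
  obtain ⟨⟨s, hsm⟩, rfl⟩ := Submodule.Quotient.mk_surjective _ v
  rw [betaMap_mk, TensorProduct.map_map]
  change qq tl hd Vx Va Wx Wa (hd a) (TensorProduct.map (Va a) (Wa a) s) = _
  rw [TensorProduct.map_map]
  rfl

end Rep

end Helpers

/-- the global tensor functor is multiplicative:
`rkf(V) ⊗ rkf(W) ≅ rkf(V ⊗ W)` as representations of `Q`. -/
theorem stmt_8 {K : Type} [Field K] {Q₀ Q₁ : Type} [Fintype Q₀] [Fintype Q₁]
    (tl hd : Q₁ → Q₀)
    (Vx : Q₀ → Type) [∀ x, AddCommGroup (Vx x)] [∀ x, Module K (Vx x)]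
    [∀ x, FiniteDimensional K (Vx x)]
    (Va : ∀ a : Q₁, Vx (tl a) →ₗ[K] Vx (hd a))
    (Wx : Q₀ → Type) [∀ x, AddCommGroup (Wx x)] [∀ x, Module K (Wx x)]
    [∀ x, FiniteDimensional K (Wx x)]
    (Wa : ∀ a : Q₁, Wx (tl a) →ₗ[K] Wx (hd a)) :
    ∃ φ : ∀ x : Q₀,
        TensorProduct K (rkfSpace tl hd Vx Va x) (rkfSpace tl hd Wx Wa x) ≃ₗ[K]
          rkfSpace tl hd (fun y => TensorProduct K (Vx y) (Wx y))
            (fun a => TensorProduct.map (Va a) (Wa a)) x,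
      ∀ (a : Q₁)
        (v : TensorProduct K (rkfSpace tl hd Vx Va (tl a)) (rkfSpace tl hd Wx Wa (tl a))),
        φ (hd a) (TensorProduct.map (rkfMap tl hd Vx Va a) (rkfMap tl hd Wx Wa a) v)
          = rkfMap tl hd (fun y => TensorProduct K (Vx y) (Wx y))
              (fun a => TensorProduct.map (Va a) (Wa a)) a (φ (tl a) v) := by
  have key : ∀ x, ∃ e : TensorProduct K (rkfSpace tl hd Vx Va x) (rkfSpace tl hd Wx Wa x) ≃ₗ[K]
          rkfSpace tl hd (fun y => TensorProduct K (Vx y) (Wx y))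
            (fun a => TensorProduct.map (Va a) (Wa a)) x,
      ∀ v, betaMap tl hd Vx Va Wx Wa x (e v) = alphaMap tl hd Vx Va Wx Wa x v := by
    intro x
    refine ⟨(LinearEquiv.ofInjective _ (alphaMap_injective tl hd Vx Va Wx Wa x)).trans
      ((LinearEquiv.ofEq _ _ (range_eq tl hd Vx Va Wx Wa x)).trans
      (LinearEquiv.ofInjective _ (betaMap_injective tl hd Vx Va Wx Wa x)).symm), fun v => ?_⟩
    have := LinearEquiv.apply_symm_apply
      (LinearEquiv.ofInjective _ (betaMap_injective tl hd Vx Va Wx Wa x))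
      (LinearEquiv.ofEq _ _ (range_eq tl hd Vx Va Wx Wa x)
        (LinearEquiv.ofInjective _ (alphaMap_injective tl hd Vx Va Wx Wa x) v))
    exact congrArg Subtype.val this
  choose φ hφ using key
  refine ⟨φ, fun a v => ?_⟩
  apply betaMap_injective tl hd Vx Va Wx Wa (hd a)
  rw [hφ, alphaMap_nat, betaMap_nat, hφ]
end

section
/- Let Q be a connected quiver, x a vertex of Q, and define the global rank function r_Q(V) := dim_K (rkf V)_x (which is independent of the choice of x). Then for all representations V, W of Q: r_Q(V⊕W) = r_Q(V) + r_Q(W) and r_Q(V⊗W) = r_Q(V) · r_Q(W), and r_Q(𝟙_Q) = 1. In particular r_Q induces a ring homomorphism from the representation ring of Q to ℤ. -/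
open Submodule

section Aux

open TensorProduct

variable {K : Type} [Field K]

section Linear

variable {V W V' W' : Type} [AddCommGroup V] [Module K V] [AddCommGroup W] [Module K W]
  [AddCommGroup V'] [Module K V'] [AddCommGroup W'] [Module K W']

/-- Contraction of a tensor against a functional on the second factor. -/
noncomputable def ctr : V ⊗[K] W →ₗ[K] (W →ₗ[K] K) →ₗ[K] V :=
  TensorProduct.lift (LinearMap.mk₂ K
    (fun v w => (LinearMap.applyₗ (R := K) (M₂ := K) w).smulRight v)
    (by intros; ext; simp) (by intros; ext; simp [smul_smul, mul_comm])
    (by intros; ext; simp [add_smul]) (by intros; ext; simp [smul_smul]))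

@[simp] lemma ctr_tmul (v : V) (w : W) (g : W →ₗ[K] K) :
    ctr (v ⊗ₜ[K] w) g = g w • v := by simp [ctr]

/-- Contraction of a tensor against a functional on the first factor. -/
noncomputable def ctl : V ⊗[K] W →ₗ[K] (V →ₗ[K] K) →ₗ[K] W :=
  ctr ∘ₗ (TensorProduct.comm K V W).toLinearMap

@[simp] lemma ctl_tmul (v : V) (w : W) (g : V →ₗ[K] K) :
    ctl (v ⊗ₜ[K] w) g = g v • w := by simp [ctl]

lemma ctr_map (p : V →ₗ[K] V') (q : W →ₗ[K] W') (e : V ⊗[K] W) (g : W' →ₗ[K] K) :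
    ctr (TensorProduct.map p q e) g = p (ctr e (g ∘ₗ q)) := by
  induction e with
  | zero => simp
  | tmul v w => simp
  | add a b ha hb => simp [ha, hb]

lemma ctl_map (p : V →ₗ[K] V') (q : W →ₗ[K] W') (e : V ⊗[K] W) (g : V' →ₗ[K] K) :
    ctl (TensorProduct.map p q e) g = q (ctl e (g ∘ₗ p)) := by
  induction e with
  | zero => simp
  | tmul v w => simp
  | add a b ha hb => simp [ha, hb]

/-- The endomorphism of the first factor attached to a tensor and a form. -/
noncomputable def phiV (e : V ⊗[K] W) (f : V ⊗[K] W →ₗ[K] K) : Module.End K V :=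
  ctr e ∘ₗ TensorProduct.curry f

/-- The endomorphism of the second factor attached to a tensor and a form. -/
noncomputable def phiW (e : V ⊗[K] W) (f : V ⊗[K] W →ₗ[K] K) : Module.End K W :=
  ctl e ∘ₗ (TensorProduct.curry f).flip

lemma trace_phiV [FiniteDimensional K V] (e : V ⊗[K] W) (f : V ⊗[K] W →ₗ[K] K) :
    LinearMap.trace K V (phiV e f) = f e := by
  induction e with
  | zero => simp [phiV]
  | tmul v w =>
    have : phiV (v ⊗ₜ[K] w) f = dualTensorHom K V V ((TensorProduct.curry f).flip w ⊗ₜ v) := by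
      ext u; simp [phiV]
    rw [this, LinearMap.trace_eq_contract_apply]
    simp
  | add a b ha hb =>
    have : phiV (a + b) f = phiV a f + phiV b f := by ext u; simp [phiV]
    rw [this, map_add, ha, hb, map_add]

lemma phi_adj (e : V ⊗[K] W) (f : V ⊗[K] W →ₗ[K] K) (v : V) (w : W) :
    f (phiV e f v ⊗ₜ w) = f (v ⊗ₜ phiW e f w) := by
  induction e with
  | zero => simp [phiV, phiW]
  | tmul a b =>
    have h1 : phiV (a ⊗ₜ[K] b) f v = f (v ⊗ₜ b) • a := by simp [phiV]
    have h2 : phiW (a ⊗ₜ[K] b) f w = f (a ⊗ₜ w) • b := by simp [phiW]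
    rw [h1, h2, TensorProduct.tmul_smul, ← TensorProduct.smul_tmul', map_smul, map_smul,
      smul_eq_mul, smul_eq_mul, mul_comm]
  | add a b ha hb =>
    have h1 : phiV (a + b) f = phiV a f + phiV b f := by ext u; simp [phiV]
    have h2 : phiW (a + b) f = phiW a f + phiW b f := by ext u; simp [phiW]
    simp [h1, h2, TensorProduct.add_tmul, TensorProduct.tmul_add, ha, hb]

lemma phi_adj_pow (e : V ⊗[K] W) (f : V ⊗[K] W →ₗ[K] K) (n : ℕ) (v : V) (w : W) :
    f ((phiV e f ^ n) v ⊗ₜ w) = f (v ⊗ₜ (phiW e f ^ n) w) := by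
  induction n generalizing v w with
  | zero => simp
  | succ n ih =>
    rw [pow_succ' (phiV e f), pow_succ (phiW e f), Module.End.mul_apply, Module.End.mul_apply,
      phi_adj, ih]

/-- Stable range. -/
def stb (φ : Module.End K V) : Submodule K V := ⨅ n : ℕ, LinearMap.range (φ ^ n)

lemma stb_eq [FiniteDimensional K V] (φ : Module.End K V) :
    ∃ N, ∀ n ≥ N, stb φ = LinearMap.range (φ ^ n) :=
  Filter.eventually_atTop.mp φ.eventually_iInf_range_pow_eq

lemma stb_map [FiniteDimensional K V] [FiniteDimensional K V'] (p : V →ₗ[K] V')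
    (X : V' →ₗ[K] V) : (stb (X ∘ₗ p : Module.End K V)).map p = stb (p ∘ₗ X : Module.End K V') := by
  obtain ⟨N, hN⟩ := stb_eq (X ∘ₗ p : Module.End K V)
  obtain ⟨N', hN'⟩ := stb_eq (p ∘ₗ X : Module.End K V')
  have key : ∀ (n : ℕ) (v : V), p (((X ∘ₗ p : Module.End K V) ^ n) v)
      = ((p ∘ₗ X : Module.End K V') ^ n) (p v) := by
    intro n
    induction n with
    | zero => simp
    | succ n ih => intro v; rw [pow_succ, pow_succ, Module.End.mul_apply, Module.End.mul_apply, ih]; rfl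
  apply le_antisymm
  · rw [hN (max N N') (le_max_left _ _), hN' (max N N') (le_max_right _ _)]
    rintro _ ⟨_, ⟨v, rfl⟩, rfl⟩
    exact ⟨p v, (key _ v).symm⟩
  · rw [hN (max N N') (le_max_left _ _), hN' (max N N' + 1) (by omega)]
    rintro _ ⟨v, rfl⟩
    refine ⟨_, ⟨X v, rfl⟩, ?_⟩
    rw [key, pow_succ, Module.End.mul_apply]; rfl

lemma phi_vanish [FiniteDimensional K V] [FiniteDimensional K W] (e : V ⊗[K] W)
    (f : V ⊗[K] W →ₗ[K] K)
    (h : ∀ v ∈ stb (phiV e f), ∀ w ∈ stb (phiW e f), f (v ⊗ₜ w) = 0) : f e = 0 := by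
  rw [← trace_phiV]
  obtain ⟨N, hN⟩ := stb_eq (phiV e f)
  obtain ⟨N', hN'⟩ := stb_eq (phiW e f)
  refine (LinearMap.isNilpotent_trace_of_isNilpotent ⟨1 + (N' + N), ?_⟩).eq_zero
  ext v
  have : TensorProduct.curry f ((phiV e f ^ (N' + N)) v) = 0 := by
    ext w
    rw [pow_add, Module.End.mul_apply]
    simp only [TensorProduct.curry_apply, LinearMap.zero_apply]
    rw [phi_adj_pow]
    apply h
    · rw [hN N le_rfl]; exact ⟨v, rfl⟩
    · rw [hN' N' le_rfl]; exact ⟨w, rfl⟩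
  rw [pow_add, Module.End.mul_apply, pow_one]
  simp [phiV] at this ⊢
  rw [this]; simp

lemma finrank_range_eq_of_ker_eq (g : V →ₗ[K] V') (h : V →ₗ[K] W')
    (hk : LinearMap.ker g = LinearMap.ker h) :
    Module.finrank K (LinearMap.range g) = Module.finrank K (LinearMap.range h) := by
  have e1 := g.quotKerEquivRange.finrank_eq
  have e2 := h.quotKerEquivRange.finrank_eq
  rw [← e1, ← e2, hk]

lemma finrank_range_tmap (p : V →ₗ[K] V') (q : W →ₗ[K] W') :
    Module.finrank K (LinearMap.range (TensorProduct.map p q)) =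
      Module.finrank K (LinearMap.range p) * Module.finrank K (LinearMap.range q) := by
  rw [← Module.finrank_tensorProduct]
  have hinj : Function.Injective (TensorProduct.map (LinearMap.range p).subtype
      (LinearMap.range q).subtype) :=
    TensorProduct.map_injective_of_flat_flat _ _ (Submodule.subtype_injective _)
      (Submodule.subtype_injective _)
  have hs : Function.Surjective (TensorProduct.map p.rangeRestrict q.rangeRestrict) :=
    TensorProduct.map_surjective p.surjective_rangeRestrict q.surjective_rangeRestrict
  have : TensorProduct.map p q = TensorProduct.map (LinearMap.range p).subtype
      (LinearMap.range q).subtype ∘ₗ TensorProduct.map p.rangeRestrict q.rangeRestrict := by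
    rw [← TensorProduct.map_comp]; rfl
  rw [this, LinearMap.range_comp, LinearMap.range_eq_top.2 hs, Submodule.map_top]
  exact LinearMap.finrank_range_of_inj hinj

lemma ker_tmap (p : V →ₗ[K] V') (q : W →ₗ[K] W') :
    LinearMap.ker (TensorProduct.map p q) =
      LinearMap.ker (TensorProduct.map p.rangeRestrict q.rangeRestrict) := by
  have hinj : Function.Injective (TensorProduct.map (LinearMap.range p).subtype
      (LinearMap.range q).subtype) :=
    TensorProduct.map_injective_of_flat_flat _ _ (Submodule.subtype_injective _)
      (Submodule.subtype_injective _)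
  have h : TensorProduct.map p q = TensorProduct.map (LinearMap.range p).subtype
      (LinearMap.range q).subtype ∘ₗ TensorProduct.map p.rangeRestrict q.rangeRestrict := by
    rw [← TensorProduct.map_comp]; rfl
  ext t
  rw [LinearMap.mem_ker, LinearMap.mem_ker, h, LinearMap.comp_apply]
  constructor
  · intro ht
    apply hinj
    rw [ht, map_zero]
  · intro ht
    rw [ht, map_zero]

lemma finrank_sprod (p : Submodule K V) (q : Submodule K W) :
    Module.finrank K (p.prod q) = Module.finrank K (p × q) := by
  have hinj : Function.Injective (p.subtype.prodMap q.subtype) := by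
    rintro ⟨a, b⟩ ⟨c, d⟩ h
    exact Prod.ext (Subtype.ext (congrArg Prod.fst h)) (Subtype.ext (congrArg Prod.snd h))
  rw [← LinearMap.finrank_range_of_inj hinj, LinearMap.range_prodMap, Submodule.range_subtype,
    Submodule.range_subtype]

end Linear

variable {Q₀ Q₁ : Type} (tl hd : Q₁ → Q₀)
variable (Vx : Q₀ → Type) [∀ x, AddCommGroup (Vx x)] [∀ x, Module K (Vx x)]
variable (Va : ∀ a : Q₁, Vx (tl a) →ₗ[K] Vx (hd a))
variable (Wx : Q₀ → Type) [∀ x, AddCommGroup (Wx x)] [∀ x, Module K (Wx x)]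
variable (Wa : ∀ a : Q₁, Wx (tl a) →ₗ[K] Wx (hd a))

lemma delta_comap (a : Q₁) :
    (Delta tl hd Vx Va (hd a)).comap (Va a) ≤ Delta tl hd Vx Va (tl a) := by
  intro v hv
  refine (Submodule.mem_iInf _).2 fun N => N.2.2 a ?_
  exact (delta_le tl hd Vx Va N.2 (hd a)) hv

/-- The map `Γ → V/Δ` whose image is the global tensor functor. -/
def gmap (x : Q₀) : Gamma tl hd Vx Va x →ₗ[K] (Vx x ⧸ Delta tl hd Vx Va x) :=
  (Delta tl hd Vx Va x).mkQ ∘ₗ (Gamma tl hd Vx Va x).subtype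

lemma ker_gmap (x : Q₀) : LinearMap.ker (gmap tl hd Vx Va x) =
    (Delta tl hd Vx Va x).comap (Gamma tl hd Vx Va x).subtype := by
  rw [gmap, LinearMap.ker_comp, Submodule.ker_mkQ]

lemma rank_eq (x : Q₀) : Module.finrank K (rkfSpace tl hd Vx Va x) =
    Module.finrank K (LinearMap.range (gmap tl hd Vx Va x)) := by
  rw [← (gmap tl hd Vx Va x).quotKerEquivRange.finrank_eq,
    ← (LinearMap.quotientInfEquivSupQuotient (Gamma tl hd Vx Va x)
      (Delta tl hd Vx Va x)).finrank_eq, ker_gmap]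
  rw [Submodule.comap_subtype_self, top_inf_eq]

lemma stb_le_gamma [∀ y, FiniteDimensional K (Vx y)] (Z : ∀ y, Set (Module.End K (Vx y)))
    (h1 : ∀ a, ∀ φ ∈ Z (tl a), ∃ X : Vx (hd a) →ₗ[K] Vx (tl a),
      φ = X ∘ₗ Va a ∧ (Va a ∘ₗ X) ∈ Z (hd a))
    (h2 : ∀ a, ∀ φ ∈ Z (hd a), ∃ X : Vx (hd a) →ₗ[K] Vx (tl a),
      φ = Va a ∘ₗ X ∧ (X ∘ₗ Va a) ∈ Z (tl a))
    (x : Q₀) (φ : Module.End K (Vx x)) (hφ : φ ∈ Z x) : stb φ ≤ Gamma tl hd Vx Va x := by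
  let U : ∀ y, Submodule K (Vx y) := fun y => ⨆ φ : Z y, stb φ.1
  have hU : IsEpiSub tl hd Vx Va U := by
    intro a
    apply le_antisymm
    · simp only [U]
      rw [Submodule.map_iSup]
      refine iSup_le fun φ => ?_
      obtain ⟨X, hX, hZ⟩ := h1 a φ.1 φ.2
      rw [hX, stb_map]
      exact le_iSup (fun φ : Z (hd a) => stb φ.1) ⟨_, hZ⟩
    · refine iSup_le fun φ => ?_
      obtain ⟨X, hX, hZ⟩ := h2 a φ.1 φ.2
      rw [hX, ← stb_map]
      exact Submodule.map_mono (le_iSup (fun φ : Z (tl a) => stb φ.1) ⟨_, hZ⟩)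
  exact (le_iSup (fun φ : Z x => stb φ.1) ⟨φ, hφ⟩).trans (le_gamma tl hd Vx Va hU x)

/-- Extend functionals vanishing on `Δ` along an arrow. -/
lemma exists_ext (a : Q₁) (f : Vx (tl a) →ₗ[K] K) (hf : Delta tl hd Vx Va (tl a) ≤ LinearMap.ker f) :
    ∃ f' : Vx (hd a) →ₗ[K] K, Delta tl hd Vx Va (hd a) ≤ LinearMap.ker f' ∧ f' ∘ₗ Va a = f := by
  let j := (Delta tl hd Vx Va (hd a)).mkQ ∘ₗ Va a
  have hj : f ∈ (LinearMap.ker j).dualAnnihilator := by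
    rw [Submodule.mem_dualAnnihilator]
    intro v hv
    apply hf
    apply delta_comap tl hd Vx Va a
    simpa [j, LinearMap.mem_ker] using hv
  rw [← LinearMap.range_dualMap_eq_dualAnnihilator_ker] at hj
  obtain ⟨g, hg⟩ := hj
  refine ⟨g ∘ₗ (Delta tl hd Vx Va (hd a)).mkQ, ?_, ?_⟩
  · intro v hv
    have : (Delta tl hd Vx Va (hd a)).mkQ v = 0 := by simpa using hv
    simp only [LinearMap.mem_ker, LinearMap.comp_apply, this, map_zero]
  · rw [← hg]; rfl

lemma lift_gamma (a : Q₁) (v : Vx (hd a)) (hv : v ∈ Gamma tl hd Vx Va (hd a)) :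
    ∃ u ∈ Gamma tl hd Vx Va (tl a), Va a u = v := by
  rw [← gamma_epi tl hd Vx Va a] at hv
  exact hv

lemma stbV_le [∀ y, FiniteDimensional K (Vx y)] (x : Q₀) (e : Vx x ⊗[K] Wx x) (he : e ∈ Gamma tl hd (fun y => TensorProduct K (Vx y) (Wx y))
      (fun a => TensorProduct.map (Va a) (Wa a)) x)
    (f : Vx x ⊗[K] Wx x →ₗ[K] K) (hf : Delta tl hd (fun y => TensorProduct K (Vx y) (Wx y))
      (fun a => TensorProduct.map (Va a) (Wa a)) x ≤ LinearMap.ker f) :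
    stb (phiV e f) ≤ Gamma tl hd Vx Va x := by
  refine stb_le_gamma tl hd Vx Va
    (fun y => {φ | ∃ e ∈ Gamma tl hd (fun y => TensorProduct K (Vx y) (Wx y))
      (fun a => TensorProduct.map (Va a) (Wa a)) y, ∃ f : Vx y ⊗[K] Wx y →ₗ[K] K, Delta tl hd (fun y => TensorProduct K (Vx y) (Wx y))
      (fun a => TensorProduct.map (Va a) (Wa a)) y ≤ LinearMap.ker f ∧ φ = phiV e f})
    ?_ ?_ x _ ⟨e, he, f, hf, rfl⟩
  · rintro a _ ⟨e, he, f, hf, rfl⟩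
    obtain ⟨f', hf', rfl⟩ := exists_ext tl hd (fun y => TensorProduct K (Vx y) (Wx y))
      (fun a => TensorProduct.map (Va a) (Wa a)) a f hf
    refine ⟨ctr e ∘ₗ LinearMap.lcomp K K (Wa a) ∘ₗ TensorProduct.curry f', ?_,
      TensorProduct.map (Va a) (Wa a) e, gamma_subrep tl hd _ _ a ⟨e, he, rfl⟩, f', hf', ?_⟩
    · rfl
    · ext v; simp only [phiV, LinearMap.comp_apply, ctr_map]; rfl
  · rintro a _ ⟨e, he, f', hf', rfl⟩
    obtain ⟨e, he0, rfl⟩ := lift_gamma tl hd (fun y => TensorProduct K (Vx y) (Wx y))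
      (fun a => TensorProduct.map (Va a) (Wa a)) a e he
    refine ⟨ctr e ∘ₗ LinearMap.lcomp K K (Wa a) ∘ₗ TensorProduct.curry f', ?_,
      e, he0, f' ∘ₗ TensorProduct.map (Va a) (Wa a), ?_, ?_⟩
    · ext v; simp only [phiV, LinearMap.comp_apply, ctr_map]; rfl
    · intro t ht
      exact hf' (delta_subrep tl hd _ _ a ⟨t, ht, rfl⟩)
    · rfl

lemma stbW_le [∀ y, FiniteDimensional K (Wx y)] (x : Q₀) (e : Vx x ⊗[K] Wx x) (he : e ∈ Gamma tl hd (fun y => TensorProduct K (Vx y) (Wx y))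
      (fun a => TensorProduct.map (Va a) (Wa a)) x)
    (f : Vx x ⊗[K] Wx x →ₗ[K] K) (hf : Delta tl hd (fun y => TensorProduct K (Vx y) (Wx y))
      (fun a => TensorProduct.map (Va a) (Wa a)) x ≤ LinearMap.ker f) :
    stb (phiW e f) ≤ Gamma tl hd Wx Wa x := by
  refine stb_le_gamma tl hd Wx Wa
    (fun y => {φ | ∃ e ∈ Gamma tl hd (fun y => TensorProduct K (Vx y) (Wx y))
      (fun a => TensorProduct.map (Va a) (Wa a)) y, ∃ f : Vx y ⊗[K] Wx y →ₗ[K] K, Delta tl hd (fun y => TensorProduct K (Vx y) (Wx y))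
      (fun a => TensorProduct.map (Va a) (Wa a)) y ≤ LinearMap.ker f ∧ φ = phiW e f})
    ?_ ?_ x _ ⟨e, he, f, hf, rfl⟩
  · rintro a _ ⟨e, he, f, hf, rfl⟩
    obtain ⟨f', hf', rfl⟩ := exists_ext tl hd (fun y => TensorProduct K (Vx y) (Wx y))
      (fun a => TensorProduct.map (Va a) (Wa a)) a f hf
    refine ⟨ctl e ∘ₗ LinearMap.lcomp K K (Va a) ∘ₗ (TensorProduct.curry f').flip, ?_,
      TensorProduct.map (Va a) (Wa a) e, gamma_subrep tl hd _ _ a ⟨e, he, rfl⟩, f', hf', ?_⟩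
    · rfl
    · ext v; simp only [phiW, LinearMap.comp_apply, ctl_map]; rfl
  · rintro a _ ⟨e, he, f', hf', rfl⟩
    obtain ⟨e, he0, rfl⟩ := lift_gamma tl hd (fun y => TensorProduct K (Vx y) (Wx y))
      (fun a => TensorProduct.map (Va a) (Wa a)) a e he
    refine ⟨ctl e ∘ₗ LinearMap.lcomp K K (Va a) ∘ₗ (TensorProduct.curry f').flip, ?_,
      e, he0, f' ∘ₗ TensorProduct.map (Va a) (Wa a), ?_, ?_⟩
    · ext v; simp only [phiW, LinearMap.comp_apply, ctl_map]; rfl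
    · intro t ht
      exact hf' (delta_subrep tl hd _ _ a ⟨t, ht, rfl⟩)
    · rfl

/-- The inclusion of `Γ(V) ⊗ Γ(W)`. -/
noncomputable def gincl (x : Q₀) :
    Gamma tl hd Vx Va x ⊗[K] Gamma tl hd Wx Wa x →ₗ[K] Vx x ⊗[K] Wx x :=
  TensorProduct.map (Gamma tl hd Vx Va x).subtype (Gamma tl hd Wx Wa x).subtype

lemma gamma_tensor_le [∀ y, FiniteDimensional K (Vx y)] [∀ y, FiniteDimensional K (Wx y)] (x : Q₀) :
    Gamma tl hd (fun y => TensorProduct K (Vx y) (Wx y))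
      (fun a => TensorProduct.map (Va a) (Wa a)) x ≤ LinearMap.range (gincl tl hd Vx Va Wx Wa x) ⊔ Delta tl hd (fun y => TensorProduct K (Vx y) (Wx y))
      (fun a => TensorProduct.map (Va a) (Wa a)) x := by
  intro e he
  by_contra hne
  obtain ⟨f, hfe, hf⟩ := Submodule.exists_dual_map_eq_bot_of_notMem hne inferInstance
  have hf' : LinearMap.range (gincl tl hd Vx Va Wx Wa x) ⊔ Delta tl hd (fun y => TensorProduct K (Vx y) (Wx y))
      (fun a => TensorProduct.map (Va a) (Wa a)) x ≤ LinearMap.ker f :=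
    LinearMap.le_ker_iff_map.2 hf
  apply hfe
  have hD := le_sup_right.trans hf'
  apply phi_vanish
  intro v hv w hw
  exact (le_sup_left.trans hf') ⟨⟨v, stbV_le tl hd Vx Va Wx Wa x e he f hD hv⟩ ⊗ₜ
    ⟨w, stbW_le tl hd Vx Va Wx Wa x e he f hD hw⟩, rfl⟩

lemma le_gamma_tensor (x : Q₀) : LinearMap.range (gincl tl hd Vx Va Wx Wa x) ≤ Gamma tl hd (fun y => TensorProduct K (Vx y) (Wx y))
      (fun a => TensorProduct.map (Va a) (Wa a)) x := by
  refine le_gamma tl hd (fun y => TensorProduct K (Vx y) (Wx y))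
    (fun a => TensorProduct.map (Va a) (Wa a))
    (U := fun x => LinearMap.range (gincl tl hd Vx Va Wx Wa x)) ?_ x
  intro a
  apply le_antisymm
  · rintro _ ⟨_, ⟨t, rfl⟩, rfl⟩
    induction t with
    | zero => simp
    | tmul v w =>
      exact ⟨⟨Va a v, gamma_subrep tl hd Vx Va a ⟨v, v.2, rfl⟩⟩ ⊗ₜ
        ⟨Wa a w, gamma_subrep tl hd Wx Wa a ⟨w, w.2, rfl⟩⟩, by simp [gincl]⟩
    | add s t hs ht => simp only [map_add]; exact add_mem hs ht
  · rintro _ ⟨t, rfl⟩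
    induction t with
    | zero => simp
    | tmul v w =>
      obtain ⟨v', hv', h1⟩ := lift_gamma tl hd Vx Va a v v.2
      obtain ⟨w', hw', h2⟩ := lift_gamma tl hd Wx Wa a w w.2
      exact ⟨_, ⟨⟨v', hv'⟩ ⊗ₜ ⟨w', hw'⟩, rfl⟩, by simp [gincl, h1, h2]⟩
    | add s t hs ht => simp only [map_add]; exact add_mem hs ht

lemma delta_tmul_left (x : Q₀) (v : Vx x) (hv : v ∈ Delta tl hd Vx Va x) (w : Wx x)
    (hw : w ∈ Gamma tl hd Wx Wa x) : v ⊗ₜ[K] w ∈ Delta tl hd (fun y => TensorProduct K (Vx y) (Wx y))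
      (fun a => TensorProduct.map (Va a) (Wa a)) x := by
  have hN : IsCoclosedSub tl hd Vx Va (fun y => ⨅ w : Gamma tl hd Wx Wa y,
      (Delta tl hd (fun y => TensorProduct K (Vx y) (Wx y))
      (fun a => TensorProduct.map (Va a) (Wa a)) y).comap ((TensorProduct.mk K (Vx y) (Wx y)).flip w)) := by
    constructor
    · rintro a _ ⟨v, hv, rfl⟩
      refine (Submodule.mem_iInf _).2 fun w => ?_
      obtain ⟨w', hw', h2⟩ := lift_gamma tl hd Wx Wa a w w.2
      have := (Submodule.mem_iInf _).1 hv ⟨w', hw'⟩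
      have := delta_subrep tl hd (fun y => TensorProduct K (Vx y) (Wx y))
        (fun a => TensorProduct.map (Va a) (Wa a)) a ⟨_, this, rfl⟩
      simpa [h2] using this
    · intro a v hv
      refine (Submodule.mem_iInf _).2 fun w => ?_
      have := (Submodule.mem_iInf _).1 hv ⟨Wa a w, gamma_subrep tl hd Wx Wa a ⟨w, w.2, rfl⟩⟩
      exact delta_comap tl hd (fun y => TensorProduct K (Vx y) (Wx y))
        (fun a => TensorProduct.map (Va a) (Wa a)) a this
  exact (Submodule.mem_iInf _).1 (delta_le tl hd Vx Va hN x hv) ⟨w, hw⟩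

lemma delta_tmul_right (x : Q₀) (v : Vx x) (hv : v ∈ Gamma tl hd Vx Va x) (w : Wx x)
    (hw : w ∈ Delta tl hd Wx Wa x) : v ⊗ₜ[K] w ∈ Delta tl hd (fun y => TensorProduct K (Vx y) (Wx y))
      (fun a => TensorProduct.map (Va a) (Wa a)) x := by
  have hN : IsCoclosedSub tl hd Wx Wa (fun y => ⨅ v : Gamma tl hd Vx Va y,
      (Delta tl hd (fun y => TensorProduct K (Vx y) (Wx y))
      (fun a => TensorProduct.map (Va a) (Wa a)) y).comap ((TensorProduct.mk K (Vx y) (Wx y)) v)) := by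
    constructor
    · rintro a _ ⟨w, hw, rfl⟩
      refine (Submodule.mem_iInf _).2 fun v => ?_
      obtain ⟨v', hv', h2⟩ := lift_gamma tl hd Vx Va a v v.2
      have := (Submodule.mem_iInf _).1 hw ⟨v', hv'⟩
      have := delta_subrep tl hd (fun y => TensorProduct K (Vx y) (Wx y))
        (fun a => TensorProduct.map (Va a) (Wa a)) a ⟨_, this, rfl⟩
      simpa [h2] using this
    · intro a w hw
      refine (Submodule.mem_iInf _).2 fun v => ?_
      have := (Submodule.mem_iInf _).1 hw ⟨Va a v, gamma_subrep tl hd Vx Va a ⟨v, v.2, rfl⟩⟩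
      exact delta_comap tl hd (fun y => TensorProduct K (Vx y) (Wx y))
        (fun a => TensorProduct.map (Va a) (Wa a)) a this
  exact (Submodule.mem_iInf _).1 (delta_le tl hd Wx Wa hN x hw) ⟨v, hv⟩

/-- The map on `V/Δ` induced by an arrow. -/
def qa (a : Q₁) : (Vx (tl a) ⧸ Delta tl hd Vx Va (tl a)) →ₗ[K]
    (Vx (hd a) ⧸ Delta tl hd Vx Va (hd a)) :=
  Submodule.mapQ _ _ (Va a) (Submodule.map_le_iff_le_comap.1 (delta_subrep tl hd Vx Va a))

lemma qa_inj (a : Q₁) : Function.Injective (qa tl hd Vx Va a) := by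
  rw [← LinearMap.ker_eq_bot, eq_bot_iff]
  intro v hv
  obtain ⟨v, rfl⟩ := Submodule.mkQ_surjective _ v
  have : Va a v ∈ Delta tl hd Vx Va (hd a) := by simpa [qa] using hv
  simpa using delta_comap tl hd Vx Va a this

lemma delta_tensor_le (x : Q₀) : Delta tl hd (fun y => TensorProduct K (Vx y) (Wx y))
      (fun a => TensorProduct.map (Va a) (Wa a)) x ≤ LinearMap.ker
    (TensorProduct.map (Delta tl hd Vx Va x).mkQ (Delta tl hd Wx Wa x).mkQ) := by
  refine delta_le tl hd (fun y => TensorProduct K (Vx y) (Wx y))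
    (fun a => TensorProduct.map (Va a) (Wa a)) (N := fun x => LinearMap.ker
    (TensorProduct.map (Delta tl hd Vx Va x).mkQ (Delta tl hd Wx Wa x).mkQ)) ?_ x
  have key : ∀ a (t : Vx (tl a) ⊗[K] Wx (tl a)),
      TensorProduct.map (Delta tl hd Vx Va (hd a)).mkQ (Delta tl hd Wx Wa (hd a)).mkQ
        (TensorProduct.map (Va a) (Wa a) t) =
      TensorProduct.map (qa tl hd Vx Va a) (qa tl hd Wx Wa a)
        (TensorProduct.map (Delta tl hd Vx Va (tl a)).mkQ (Delta tl hd Wx Wa (tl a)).mkQ t) := by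
    intro a t
    rw [← LinearMap.comp_apply, ← LinearMap.comp_apply, ← TensorProduct.map_comp,
      ← TensorProduct.map_comp]
    rfl
  constructor
  · rintro a _ ⟨t, ht, rfl⟩
    have ht' : TensorProduct.map (Delta tl hd Vx Va (tl a)).mkQ (Delta tl hd Wx Wa (tl a)).mkQ t = 0 :=
      ht
    rw [LinearMap.mem_ker, key, ht', map_zero]
  · intro a t ht
    have ht' : TensorProduct.map (Delta tl hd Vx Va (hd a)).mkQ (Delta tl hd Wx Wa (hd a)).mkQ
        (TensorProduct.map (Va a) (Wa a) t) = 0 := ht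
    rw [key] at ht'
    apply TensorProduct.map_injective_of_flat_flat _ _ (qa_inj tl hd Vx Va a) (qa_inj tl hd Wx Wa a)
    rw [ht', map_zero]

lemma ker_tensor (x : Q₀) :
    LinearMap.ker ((Delta tl hd (fun y => TensorProduct K (Vx y) (Wx y))
      (fun a => TensorProduct.map (Va a) (Wa a)) x).mkQ ∘ₗ gincl tl hd Vx Va Wx Wa x) =
    LinearMap.ker (TensorProduct.map (gmap tl hd Vx Va x) (gmap tl hd Wx Wa x)) := by
  apply le_antisymm
  · intro t ht
    have ht' : gincl tl hd Vx Va Wx Wa x t ∈ Delta tl hd (fun y => TensorProduct K (Vx y) (Wx y))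
      (fun a => TensorProduct.map (Va a) (Wa a)) x := by simpa [LinearMap.mem_ker] using ht
    have := delta_tensor_le tl hd Vx Va Wx Wa x ht'
    rw [LinearMap.mem_ker, gincl, ← LinearMap.comp_apply, ← TensorProduct.map_comp] at this
    exact this
  · rw [ker_tmap]
    have ex : ∀ {M N : Type} [AddCommGroup M] [AddCommGroup N] [Module K M] [Module K N]
        (p : M →ₗ[K] N), Function.Exact (LinearMap.ker p).subtype p.rangeRestrict := by
      intro M N _ _ _ _ p
      rw [LinearMap.exact_iff, LinearMap.ker_rangeRestrict, Submodule.range_subtype]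
    rw [TensorProduct.map_ker (ex (gmap tl hd Vx Va x)) (LinearMap.surjective_rangeRestrict _)
      (ex (gmap tl hd Wx Wa x)) (LinearMap.surjective_rangeRestrict _)]
    refine sup_le ?_ ?_
    · rintro _ ⟨t, rfl⟩
      induction t with
      | zero => simp
      | tmul v w =>
        have hw : (w : Gamma tl hd Wx Wa x) ∈
            (Delta tl hd Wx Wa x).comap (Gamma tl hd Wx Wa x).subtype :=
          (ker_gmap tl hd Wx Wa x).le w.2
        simpa [gincl] using delta_tmul_right tl hd Vx Va Wx Wa x v v.2 _ hw
      | add s t hs ht => rw [map_add]; exact add_mem hs ht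
    · rintro _ ⟨t, rfl⟩
      induction t with
      | zero => simp
      | tmul v w =>
        have hv : (v : Gamma tl hd Vx Va x) ∈
            (Delta tl hd Vx Va x).comap (Gamma tl hd Vx Va x).subtype :=
          (ker_gmap tl hd Vx Va x).le v.2
        simpa [gincl] using delta_tmul_left tl hd Vx Va Wx Wa x _ hv w w.2
      | add s t hs ht => rw [map_add]; exact add_mem hs ht

lemma range_gmap (x : Q₀) : LinearMap.range (gmap tl hd Vx Va x) =
    (Gamma tl hd Vx Va x).map (Delta tl hd Vx Va x).mkQ := by
  rw [gmap, LinearMap.range_comp, Submodule.range_subtype]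

lemma rank_tensor [∀ y, FiniteDimensional K (Vx y)] [∀ y, FiniteDimensional K (Wx y)] (x : Q₀) :
    Module.finrank K (rkfSpace tl hd (fun y => TensorProduct K (Vx y) (Wx y))
        (fun a => TensorProduct.map (Va a) (Wa a)) x)
      = Module.finrank K (rkfSpace tl hd Vx Va x)
        * Module.finrank K (rkfSpace tl hd Wx Wa x) := by
  rw [rank_eq, rank_eq tl hd Vx, rank_eq tl hd Wx, ← finrank_range_tmap,
    ← finrank_range_eq_of_ker_eq _ _ (ker_tensor tl hd Vx Va Wx Wa x), range_gmap,
    LinearMap.range_comp]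
  have : (Gamma tl hd (fun y => TensorProduct K (Vx y) (Wx y))
      (fun a => TensorProduct.map (Va a) (Wa a)) x).map (Delta tl hd (fun y => TensorProduct K (Vx y) (Wx y))
      (fun a => TensorProduct.map (Va a) (Wa a)) x).mkQ =
      (LinearMap.range (gincl tl hd Vx Va Wx Wa x)).map (Delta tl hd (fun y => TensorProduct K (Vx y) (Wx y))
      (fun a => TensorProduct.map (Va a) (Wa a)) x).mkQ := by
    apply le_antisymm
    · refine (Submodule.map_mono (gamma_tensor_le tl hd Vx Va Wx Wa x)).trans ?_
      rw [Submodule.map_sup, Submodule.mkQ_map_self, sup_bot_eq]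
    · exact Submodule.map_mono (le_gamma_tensor tl hd Vx Va Wx Wa x)
  rw [this]

lemma gamma_prod (x : Q₀) : Gamma tl hd (fun y => Vx y × Wx y)
    (fun a => (Va a).prodMap (Wa a)) x = (Gamma tl hd Vx Va x).prod (Gamma tl hd Wx Wa x) := by
  apply le_antisymm
  · refine iSup_le fun U => ?_
    have h1 : IsEpiSub tl hd Vx Va (fun y => (U.1 y).map (LinearMap.fst K _ _)) := by
      intro a
      beta_reduce
      rw [← U.2 a, ← Submodule.map_comp, ← Submodule.map_comp]; rfl
    have h2 : IsEpiSub tl hd Wx Wa (fun y => (U.1 y).map (LinearMap.snd K _ _)) := by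
      intro a
      beta_reduce
      rw [← U.2 a, ← Submodule.map_comp, ← Submodule.map_comp]; rfl
    intro p hp
    exact ⟨le_gamma tl hd Vx Va h1 x ⟨p, hp, rfl⟩, le_gamma tl hd Wx Wa h2 x ⟨p, hp, rfl⟩⟩
  · refine le_gamma tl hd (fun y => Vx y × Wx y) (fun a => (Va a).prodMap (Wa a))
      (U := fun x => (Gamma tl hd Vx Va x).prod (Gamma tl hd Wx Wa x)) ?_ x
    intro a
    apply le_antisymm
    · rintro _ ⟨p, hp, rfl⟩
      exact ⟨gamma_subrep tl hd Vx Va a ⟨_, hp.1, rfl⟩, gamma_subrep tl hd Wx Wa a ⟨_, hp.2, rfl⟩⟩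
    · rintro ⟨v, w⟩ ⟨hv, hw⟩
      obtain ⟨v', hv', h1⟩ := lift_gamma tl hd Vx Va a v hv
      obtain ⟨w', hw', h2⟩ := lift_gamma tl hd Wx Wa a w hw
      exact ⟨(v', w'), ⟨hv', hw'⟩, Prod.ext h1 h2⟩

lemma delta_prod (x : Q₀) : Delta tl hd (fun y => Vx y × Wx y)
    (fun a => (Va a).prodMap (Wa a)) x = (Delta tl hd Vx Va x).prod (Delta tl hd Wx Wa x) := by
  apply le_antisymm
  · refine delta_le tl hd (fun y => Vx y × Wx y) (fun a => (Va a).prodMap (Wa a))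
      (N := fun x => (Delta tl hd Vx Va x).prod (Delta tl hd Wx Wa x)) ⟨?_, ?_⟩ x
    · rintro a _ ⟨p, hp, rfl⟩
      exact ⟨delta_subrep tl hd Vx Va a ⟨_, hp.1, rfl⟩, delta_subrep tl hd Wx Wa a ⟨_, hp.2, rfl⟩⟩
    · rintro a p hp
      exact ⟨delta_comap tl hd Vx Va a hp.1, delta_comap tl hd Wx Wa a hp.2⟩
  · refine le_iInf fun N => ?_
    have h1 : IsCoclosedSub tl hd Vx Va (fun y => (N.1 y).comap (LinearMap.inl K _ _)) := by
      constructor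
      · rintro a _ ⟨v, hv, rfl⟩
        simpa using N.2.1 a ⟨_, hv, rfl⟩
      · intro a v hv
        exact N.2.2 a (by simpa using hv)
    have h2 : IsCoclosedSub tl hd Wx Wa (fun y => (N.1 y).comap (LinearMap.inr K _ _)) := by
      constructor
      · rintro a _ ⟨v, hv, rfl⟩
        simpa using N.2.1 a ⟨_, hv, rfl⟩
      · intro a v hv
        exact N.2.2 a (by simpa using hv)
    rintro ⟨v, w⟩ ⟨hv, hw⟩
    have a1 : (v, (0 : Wx x)) ∈ N.1 x := delta_le tl hd Vx Va h1 x hv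
    have a2 : ((0 : Vx x), w) ∈ N.1 x := delta_le tl hd Wx Wa h2 x hw
    simpa using add_mem a1 a2

lemma rk_prod [∀ y, FiniteDimensional K (Vx y)] [∀ y, FiniteDimensional K (Wx y)] (x : Q₀) :
    Module.finrank K (rkfSpace tl hd (fun y => Vx y × Wx y)
        (fun a => (Va a).prodMap (Wa a)) x)
      = Module.finrank K (rkfSpace tl hd Vx Va x)
        + Module.finrank K (rkfSpace tl hd Wx Wa x) := by
  rw [rank_eq, rank_eq tl hd Vx, rank_eq tl hd Wx, range_gmap]
  have h1 : Module.finrank K (LinearMap.range ((gmap tl hd Vx Va x).prodMap (gmap tl hd Wx Wa x)))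
      = Module.finrank K (LinearMap.range (gmap tl hd Vx Va x))
      + Module.finrank K (LinearMap.range (gmap tl hd Wx Wa x)) := by
    rw [LinearMap.range_prodMap, ← Module.finrank_prod]
    exact finrank_sprod _ _
  rw [← h1]
  let g := (Delta tl hd (fun y => Vx y × Wx y) (fun a => (Va a).prodMap (Wa a)) x).mkQ ∘ₗ
    (Gamma tl hd Vx Va x).subtype.prodMap (Gamma tl hd Wx Wa x).subtype
  have h2 : (Gamma tl hd (fun y => Vx y × Wx y) (fun a => (Va a).prodMap (Wa a)) x).map
      (Delta tl hd (fun y => Vx y × Wx y) (fun a => (Va a).prodMap (Wa a)) x).mkQ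
      = LinearMap.range g := by
    rw [LinearMap.range_comp, LinearMap.range_prodMap, Submodule.range_subtype,
      Submodule.range_subtype, gamma_prod]
  rw [h2]
  apply finrank_range_eq_of_ker_eq
  rw [LinearMap.ker_prodMap, ker_gmap, ker_gmap, LinearMap.ker_comp, Submodule.ker_mkQ, delta_prod]
  rfl

lemma rank_one (x : Q₀) :
    Module.finrank K (rkfSpace (K := K) tl hd (fun _ => K) (fun _ => LinearMap.id) x) = 1 := by
  have cD : IsCoclosedSub (K := K) tl hd (fun _ => K) (fun _ => LinearMap.id) (fun _ => ⊥) := by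
    constructor
    · intro a; simp
    · intro a v hv; exact hv
  have cG : IsEpiSub (K := K) tl hd (fun _ => K) (fun _ => LinearMap.id) (fun _ => ⊤) := by
    intro a
    apply le_antisymm
    · exact le_top
    · intro v _; exact ⟨v, trivial, rfl⟩
  have hD : Delta (K := K) tl hd (fun _ => K) (fun _ => LinearMap.id) x = ⊥ :=
    eq_bot_iff.2 (delta_le tl hd _ _ cD x)
  have hG : Gamma (K := K) tl hd (fun _ => K) (fun _ => LinearMap.id) x = ⊤ :=
    eq_top_iff.2 (le_gamma tl hd _ _ cG x)
  have hinj : Function.Injective (gmap (K := K) tl hd (fun _ => K) (fun _ => LinearMap.id) x) := by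
    rw [← LinearMap.ker_eq_bot, ker_gmap, hD]
    exact Submodule.ker_subtype _
  rw [rank_eq, LinearMap.finrank_range_of_inj hinj, hG, finrank_top, Module.finrank_self]

end Aux

/-- the global rank function `r_Q(V) = dim_K (rkf V)_x` (on a connected quiver,
independent of `x`) is additive on direct sums, multiplicative on tensor products, and takes
the value `1` on the identity representation; hence it induces a ring homomorphism
`R(Q) → ℤ`. -/
theorem stmt_9 {K : Type} [Field K] {Q₀ Q₁ : Type} [Fintype Q₀] [Fintype Q₁]
    (tl hd : Q₁ → Q₀)
    (hconn : ∀ x y : Q₀, Relation.ReflTransGen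
      (fun u v => ∃ a : Q₁, (tl a = u ∧ hd a = v) ∨ (hd a = u ∧ tl a = v)) x y)
    (x : Q₀)
    (Vx : Q₀ → Type) [∀ y, AddCommGroup (Vx y)] [∀ y, Module K (Vx y)]
    [∀ y, FiniteDimensional K (Vx y)]
    (Va : ∀ a : Q₁, Vx (tl a) →ₗ[K] Vx (hd a))
    (Wx : Q₀ → Type) [∀ y, AddCommGroup (Wx y)] [∀ y, Module K (Wx y)]
    [∀ y, FiniteDimensional K (Wx y)]
    (Wa : ∀ a : Q₁, Wx (tl a) →ₗ[K] Wx (hd a)) :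
    Module.finrank K (rkfSpace tl hd (fun y => Vx y × Wx y)
        (fun a => (Va a).prodMap (Wa a)) x)
      = Module.finrank K (rkfSpace tl hd Vx Va x)
        + Module.finrank K (rkfSpace tl hd Wx Wa x) ∧
    Module.finrank K (rkfSpace tl hd (fun y => TensorProduct K (Vx y) (Wx y))
        (fun a => TensorProduct.map (Va a) (Wa a)) x)
      = Module.finrank K (rkfSpace tl hd Vx Va x)
        * Module.finrank K (rkfSpace tl hd Wx Wa x) ∧
    Module.finrank K (rkfSpace (K := K) tl hd (fun _ => K) (fun _ => LinearMap.id) x) = 1 := by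
  exact ⟨rk_prod tl hd Vx Va Wx Wa x, rank_tensor tl hd Vx Va Wx Wa x, rank_one tl hd x⟩
end

section
/- Let Q be a tree quiver and V a representation of Q over a field K. Then for every vertex x: (i) Γ(V)_x = { v ∈ V_x : there exists a family (w_y)_{y∈Q₀} with w_y ∈ V_y, w_x = v, and V_a(w_{ta}) = w_{ha} for every arrow a }; and (ii) Δ(V)_x = ∩ { ker g_x : (g_y)_{y∈Q₀} a family with g_y ∈ V_y^* and g_{ha}∘V_a = g_{ta} for every arrow a }. -/
open Submodule

/-- Gluing along a tree: relations that are total in both directions admit global sections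
through any prescribed value at a vertex. -/
lemma tree_glue {Q₀ Q₁ : Type} [Fintype Q₀] [Fintype Q₁]
    (tl hd : Q₁ → Q₀)
    (hconn : ∀ x y : Q₀, Relation.ReflTransGen
      (fun u v => ∃ a : Q₁, (tl a = u ∧ hd a = v) ∨ (hd a = u ∧ tl a = v)) x y)
    (htree : Fintype.card Q₀ = Fintype.card Q₁ + 1)
    (S : Q₀ → Type) (R : ∀ a : Q₁, S (tl a) → S (hd a) → Prop)
    (w0 : ∀ y, S y)
    (hR : ∀ a s, ∃ t, R a s t) (hL : ∀ a t, ∃ s, R a s t)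
    (x : Q₀) (s : S x) :
    ∃ w : ∀ y, S y, w x = s ∧ ∀ a, R a (w (tl a)) (w (hd a)) := by
  classical
  have key : ∀ n : ℕ, n + 1 ≤ Fintype.card Q₀ →
      ∃ (T : Finset Q₀) (E : Finset Q₁) (w : ∀ y, S y),
        T.card = n + 1 ∧ E.card = n ∧ x ∈ T ∧ w x = s ∧
        ∀ a ∈ E, tl a ∈ T ∧ hd a ∈ T ∧ R a (w (tl a)) (w (hd a)) := by
    intro n
    induction n with
    | zero =>
      intro _
      exact ⟨{x}, ∅, Function.update w0 x s, by simp, by simp, by simp, by simp, by simp⟩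
    | succ n ih =>
      intro hn
      obtain ⟨T, E, w, hT, hE, hxT, hws, hw⟩ := ih (by omega)
      have hz : ∃ z, z ∉ T := by
        by_contra! h
        have h2 : T = Finset.univ := Finset.eq_univ_iff_forall.mpr h
        rw [h2, Finset.card_univ] at hT
        omega
      obtain ⟨z, hz⟩ := hz
      have hedge : ∃ a, (tl a ∈ T ∧ hd a ∉ T) ∨ (hd a ∈ T ∧ tl a ∉ T) := by
        by_contra! h
        apply hz
        have hxz := hconn x z
        induction hxz with
        | refl => exact hxT
        | tail _ hstep ih2 =>
          rename_i b c _
          have hb : b ∈ T := by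
            by_contra hb
            exact hb (ih2 hb)
          obtain ⟨a, ⟨h1, h2⟩ | ⟨h1, h2⟩⟩ := hstep
          · subst h1; subst h2; exact (h a).1 hb
          · subst h1; subst h2; exact (h a).2 hb
      have ext : ∀ (a : Q₁) (p : Q₀) (w' : ∀ y, S y), p ∉ T → (∀ y ∈ T, w' y = w y) →
          tl a ∈ insert p T → hd a ∈ insert p T → (tl a = p ∨ hd a = p) →
          R a (w' (tl a)) (w' (hd a)) →
          ∃ (T : Finset Q₀) (E : Finset Q₁) (w : ∀ y, S y),
          T.card = n + 1 + 1 ∧ E.card = n + 1 ∧ x ∈ T ∧ w x = s ∧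
          ∀ a ∈ E, tl a ∈ T ∧ hd a ∈ T ∧ R a (w (tl a)) (w (hd a)) := by
        intro a p w' hp hag h1 h2 h3 h4
        have haE : a ∉ E := by
          intro haE
          obtain ⟨h5, h6, -⟩ := hw a haE
          rcases h3 with h3 | h3
          · exact hp (h3 ▸ h5)
          · exact hp (h3 ▸ h6)
        refine ⟨insert p T, insert a E, w', ?_, ?_, ?_, ?_, ?_⟩
        · rw [Finset.card_insert_of_notMem hp, hT]
        · rw [Finset.card_insert_of_notMem haE, hE]
        · exact Finset.mem_insert_of_mem hxT
        · rw [hag x hxT, hws]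
        · intro b hb
          rcases Finset.mem_insert.mp hb with rfl | hb
          · exact ⟨h1, h2, h4⟩
          · obtain ⟨h5, h6, h7⟩ := hw b hb
            refine ⟨Finset.mem_insert_of_mem h5, Finset.mem_insert_of_mem h6, ?_⟩
            rw [hag _ h5, hag _ h6]
            exact h7
      obtain ⟨a, ⟨h1, h2⟩ | ⟨h1, h2⟩⟩ := hedge
      · obtain ⟨t, ht⟩ := hR a (w (tl a))
        have hne : tl a ≠ hd a := fun h => h2 (h ▸ h1)
        refine ext a (hd a) (Function.update w (hd a) t) h2 ?_ (by simp [h1]) (by simp)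
          (Or.inr rfl) ?_
        · intro y hy
          exact Function.update_of_ne (ne_of_mem_of_not_mem hy h2) _ _
        · rw [Function.update_of_ne hne, Function.update_self]
          exact ht
      · obtain ⟨t, ht⟩ := hL a (w (hd a))
        have hne : hd a ≠ tl a := fun h => h2 (h ▸ h1)
        refine ext a (tl a) (Function.update w (tl a) t) h2 ?_ (by simp) (by simp [h1])
          (Or.inl rfl) ?_
        · intro y hy
          exact Function.update_of_ne (ne_of_mem_of_not_mem hy h2) _ _
        · rw [Function.update_of_ne hne, Function.update_self]
          exact ht
  obtain ⟨T, E, w, -, hE, -, hws, hw⟩ := key (Fintype.card Q₁) htree.ge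
  have hEu : E = Finset.univ := (Finset.card_eq_iff_eq_univ E).mp hE
  exact ⟨w, hws, fun a => (hw a (hEu ▸ Finset.mem_univ a)).2.2⟩

/-- A functional vanishing on `N` extends along `f` when `f⁻¹(M) ≤ N`. -/
lemma extend_functional {K V W : Type} [Field K] [AddCommGroup V] [Module K V]
    [AddCommGroup W] [Module K W] (f : V →ₗ[K] W) (N : Submodule K V) (M : Submodule K W)
    (h : M.comap f ≤ N) (g : Module.Dual K V) (hg : ∀ v ∈ N, g v = 0) :
    ∃ g' : Module.Dual K W, (∀ w ∈ M, g' w = 0) ∧ g'.comp f = g := by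
  let q : V →ₗ[K] (W ⧸ M) := M.mkQ ∘ₗ f
  have hq : LinearMap.ker q ≤ LinearMap.ker g := by
    intro v hv
    have : f v ∈ M := by simpa [q] using hv
    exact hg v (h this)
  have hmem : g ∈ LinearMap.range q.dualMap := by
    rw [LinearMap.range_dualMap_eq_dualAnnihilator_ker, Submodule.mem_dualAnnihilator]
    exact fun v hv => hq hv
  obtain ⟨r, hr⟩ := hmem
  exact ⟨r ∘ₗ M.mkQ, fun w hw => by simp [(Submodule.Quotient.mk_eq_zero M).mpr hw], by
    rw [← hr]; rfl⟩

/-- `Δ(V)` is coclosed. -/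
lemma delta_coclosed_s11 {K : Type} [Field K] {Q₀ Q₁ : Type} (tl hd : Q₁ → Q₀)
    (Vx : Q₀ → Type) [∀ x, AddCommGroup (Vx x)] [∀ x, Module K (Vx x)]
    (Va : ∀ a : Q₁, Vx (tl a) →ₗ[K] Vx (hd a)) (a : Q₁) :
    (Delta tl hd Vx Va (hd a)).comap (Va a) ≤ Delta tl hd Vx Va (tl a) :=
  le_iInf fun N => (Submodule.comap_mono (delta_le tl hd Vx Va N.2 (hd a))).trans (N.2.2 a)

/-- on a tree quiver, `Γ(V)_x` consists exactly of the vectors extendable to a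
global section `(w_y)` (i.e. a morphism `𝟙 → V`), and `Δ(V)_x` is the common kernel at `x` of
all families of functionals `(g_y)` compatible with the arrows (morphisms `V → 𝟙`). -/
theorem stmt_11 {K : Type} [Field K] {Q₀ Q₁ : Type} [Fintype Q₀] [Fintype Q₁]
    (tl hd : Q₁ → Q₀)
    (hconn : ∀ x y : Q₀, Relation.ReflTransGen
      (fun u v => ∃ a : Q₁, (tl a = u ∧ hd a = v) ∨ (hd a = u ∧ tl a = v)) x y)
    (htree : Fintype.card Q₀ = Fintype.card Q₁ + 1)
    (Vx : Q₀ → Type) [∀ x, AddCommGroup (Vx x)] [∀ x, Module K (Vx x)]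
    [∀ x, FiniteDimensional K (Vx x)]
    (Va : ∀ a : Q₁, Vx (tl a) →ₗ[K] Vx (hd a)) :
    (∀ (x : Q₀) (v : Vx x), v ∈ Gamma tl hd Vx Va x ↔
      ∃ w : ∀ y, Vx y, w x = v ∧ ∀ a : Q₁, Va a (w (tl a)) = w (hd a)) ∧
    (∀ (x : Q₀) (v : Vx x), v ∈ Delta tl hd Vx Va x ↔
      ∀ g : ∀ y, Module.Dual K (Vx y),
        (∀ a : Q₁, (g (hd a)).comp (Va a) = g (tl a)) → g x v = 0) := by
  refine ⟨fun x v => ⟨fun hv => ?_, ?_⟩, fun x v => ⟨fun hv g hg => ?_, fun h => ?_⟩⟩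
  · obtain ⟨w, hwx, hw⟩ := tree_glue tl hd hconn htree
      (fun y => Gamma tl hd Vx Va y) (fun a s t => Va a s.1 = t.1) (fun y => 0)
      (fun a s => ⟨⟨Va a s.1, gamma_subrep tl hd Vx Va a ⟨s.1, s.2, rfl⟩⟩, rfl⟩)
      (fun a t => by
        obtain ⟨s, hs, hst⟩ := (gamma_epi tl hd Vx Va a).ge t.2
        exact ⟨⟨s, hs⟩, hst⟩) x ⟨v, hv⟩
    exact ⟨fun y => (w y).1, congrArg Subtype.val hwx, hw⟩
  · rintro ⟨w, rfl, hw⟩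
    refine le_gamma tl hd Vx Va (U := fun y => Submodule.span K {w y}) (fun a => ?_) x
      (Submodule.mem_span_singleton_self _)
    rw [Submodule.map_span, Set.image_singleton, hw a]
  · refine delta_le tl hd Vx Va (N := fun y => LinearMap.ker (g y)) ⟨fun a => ?_, fun a => ?_⟩ x hv
    · rintro _ ⟨u, hu, rfl⟩
      have hu' : g (tl a) u = 0 := hu
      rw [← hg a] at hu'
      exact hu'
    · intro u hu
      show g (tl a) u = 0
      rw [← hg a]
      exact hu
  · by_contra hv
    obtain ⟨f, hfv, hf⟩ := Submodule.exists_le_ker_of_notMem hv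
    obtain ⟨w, hwx, hw⟩ := tree_glue tl hd hconn htree
      (fun y => {g : Module.Dual K (Vx y) // ∀ u ∈ Delta tl hd Vx Va y, g u = 0})
      (fun a s t => t.1.comp (Va a) = s.1) (fun y => ⟨0, fun _ _ => rfl⟩)
      (fun a s => by
        obtain ⟨g', h1, h2⟩ := extend_functional (Va a) _ _
          (delta_coclosed_s11 tl hd Vx Va a) s.1 s.2
        exact ⟨⟨g', h1⟩, h2⟩)
      (fun a t => ⟨⟨t.1.comp (Va a), fun u hu =>
        t.2 _ (delta_subrep tl hd Vx Va a ⟨u, hu, rfl⟩)⟩, rfl⟩) x ⟨f, fun u hu => hf hu⟩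
    apply hfv
    have h3 := h (fun y => (w y).1) hw
    simp only [hwx] at h3
    exact h3
end
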